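/- arXiv:1508.03182 — 2 statements merged into one kernel-verified Lean document; each statement's English description precedes it below -/
import Mathlib

section
/- Let (Ω, 𝒜, μ) be a measure space, p ∈ [1,∞), and T a positive C₀-semigroup on L_p(μ) with generator A. If V : Ω → [0,∞] is T-admissible, then for every ε > 0 the function V is strongly T_{εV}-regular; that is, writing S := T_{εV}, the rate V is strongly S-regular: (S_V)_{−V} = S. In particular every positive multiple of V is strongly T_V-regular. -/
open MeasureTheory Filter Topology ENNReal

noncomputable section

namespace Absorption

variable {E : Type*} [NormedAddCommGroup E] [NormedSpace ℝ E]

/-- A one-parameter semigroup of bounded operators (for nonnegative times). -/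
def IsSemigroup (T : ℝ → E →L[ℝ] E) : Prop :=
  T 0 = ContinuousLinearMap.id ℝ E ∧
    ∀ s t : ℝ, 0 ≤ s → 0 ≤ t → T (s + t) = (T s).comp (T t)

/-- A `C₀`-semigroup: a one-parameter semigroup which is strongly continuous on `[0, ∞)`. -/
def IsC0Semigroup (T : ℝ → E →L[ℝ] E) : Prop :=
  IsSemigroup T ∧ ∀ f : E, ContinuousOn (fun t => T t f) (Set.Ici (0 : ℝ))

/-- `(f, g)` belongs to the graph of the generator of the semigroup `T`. -/
def InGenerator (T : ℝ → E →L[ℝ] E) (f g : E) : Prop :=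
  Tendsto (fun t : ℝ => t⁻¹ • (T t f - f)) (𝓝[>] (0 : ℝ)) (𝓝 g)

variable {Ω : Type*} [MeasurableSpace Ω]

/-- A function into a measurable space is *locally measurable* (w.r.t. `μ`) if on every set of
finite measure it coincides a.e. with a measurable function. -/
def LocallyMeasurable {α : Type*} [MeasurableSpace α] (μ : Measure Ω) (V : Ω → α) : Prop :=
  ∀ B : Set Ω, MeasurableSet B → μ B < ∞ →
    ∃ g : Ω → α, Measurable g ∧ ∀ᵐ ω ∂(μ.restrict B), V ω = g ω

/-- A set is a local `μ`-null set if its intersection with every measurable set of finite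
measure is null. -/
def IsLocalNullSet (μ : Measure Ω) (N : Set Ω) : Prop :=
  ∀ B : Set Ω, MeasurableSet B → μ B < ∞ → μ (N ∩ B) = 0

/-- Positivity of a family of operators on `L_p` (for positive times). -/
def IsPositiveSG {p : ℝ≥0∞} {μ : Measure Ω} [Fact (1 ≤ p)]
    (T : ℝ → Lp ℝ p μ →L[ℝ] Lp ℝ p μ) : Prop :=
  ∀ t : ℝ, 0 ≤ t → ∀ f : Lp ℝ p μ, 0 ≤ f → 0 ≤ T t f

/-- A band projection on the Banach lattice `L_p(μ)`: an idempotent operator `P`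
with `0 ≤ P f ≤ f` for all `f ≥ 0`. -/
def IsBandProjection {p : ℝ≥0∞} {μ : Measure Ω} [Fact (1 ≤ p)]
    (P : Lp ℝ p μ →L[ℝ] Lp ℝ p μ) : Prop :=
  P.comp P = P ∧ ∀ f : Lp ℝ p μ, 0 ≤ f → 0 ≤ P f ∧ P f ≤ f

/-- `S = (e^{t(A−W)})_{t ≥ 0}`: `S` is the `C₀`-semigroup whose generator is `A - W`,
where `A` is the generator of `T` and the bounded function `W` acts by multiplication. -/
def IsPerturbedSG (μ : Measure Ω) (p : ℝ≥0∞) [Fact (1 ≤ p)]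
    (T S : ℝ → Lp ℝ p μ →L[ℝ] Lp ℝ p μ) (W : Ω → ℝ) : Prop :=
  IsC0Semigroup S ∧
    ∀ f g : Lp ℝ p μ, InGenerator S f g ↔
      ∃ g₀ : Lp ℝ p μ, InGenerator T f g₀ ∧
        ⇑g =ᵐ[μ] fun ω => g₀ ω - W ω * f ω

/-- Same as `IsPerturbedSG`, for semigroups acting on a subspace `F` of `L_p(μ)`. -/
def IsPerturbedSGSub (μ : Measure Ω) (p : ℝ≥0∞) [Fact (1 ≤ p)] (F : Submodule ℝ (Lp ℝ p μ))
    (T S : ℝ → F →L[ℝ] F) (W : Ω → ℝ) : Prop :=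
  IsC0Semigroup S ∧
    ∀ f g : F, InGenerator S f g ↔
      ∃ g₀ : F, InGenerator T f g₀ ∧
        ⇑(g : Lp ℝ p μ) =ᵐ[μ] fun ω => (g₀ : Lp ℝ p μ) ω - W ω * (f : Lp ℝ p μ) ω

/-- The truncation `V ∧ n` of `V : Ω → [0,∞]`, as a real-valued function. -/
def trunc (V : Ω → ℝ≥0∞) (n : ℕ) : Ω → ℝ := fun ω => (min (V ω) (n : ℝ≥0∞)).toReal

/-- The scalar multiple `ε V` of an absorption rate `V : Ω → [0,∞]`. -/
def smulRate (ε : ℝ) (V : Ω → ℝ≥0∞) : Ω → ℝ≥0∞ := fun ω => ENNReal.ofReal ε * V ω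

/-- The absorption rate `V - V ∧ n` (with value `∞` wherever `V = ∞`). -/
def resid (V : Ω → ℝ≥0∞) (n : ℕ) : Ω → ℝ≥0∞ := fun ω => V ω - min (V ω) (n : ℝ≥0∞)

/-- `TV` is the absorption semigroup `T_V` associated with the rate `V : Ω → [0,∞]`, i.e.
the strong limit `T_V(t) = s-lim_{n→∞} e^{t(A - V∧n)}` (for `t ≥ 0`). -/
def IsAbsorptionSG (μ : Measure Ω) (p : ℝ≥0∞) [Fact (1 ≤ p)]
    (T : ℝ → Lp ℝ p μ →L[ℝ] Lp ℝ p μ) (V : Ω → ℝ≥0∞)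
    (TV : ℝ → Lp ℝ p μ →L[ℝ] Lp ℝ p μ) : Prop :=
  ∃ S : ℕ → ℝ → Lp ℝ p μ →L[ℝ] Lp ℝ p μ,
    (∀ n, IsPerturbedSG μ p T (S n) (trunc V n)) ∧
    ∀ t : ℝ, 0 ≤ t → ∀ f, Tendsto (fun n => S n t f) atTop (𝓝 (TV t f))

/-- `V : Ω → [0,∞]` is `T`-admissible: `V` is locally measurable, the strong limits
`T_V(t) = s-lim_{n→∞} e^{t(A - V∧n)}` exist, and `T_V` is a `C₀`-semigroup. -/
def Admissible (μ : Measure Ω) (p : ℝ≥0∞) [Fact (1 ≤ p)]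
    (T : ℝ → Lp ℝ p μ →L[ℝ] Lp ℝ p μ) (V : Ω → ℝ≥0∞) : Prop :=
  LocallyMeasurable μ V ∧
  ∃ TV, IsAbsorptionSG μ p T V TV ∧ IsC0Semigroup TV

/-- The truncation `(V ∧ n) ∨ (−n)` of an extended-real-valued rate, as a real function. -/
def truncE (V : Ω → EReal) (n : ℕ) : Ω → ℝ :=
  fun ω => (max (min (V ω) (n : EReal)) (-(n : EReal))).toReal

/-- `TV` is the absorption semigroup `T_V` of an extended-real-valued rate `V`:
`T_V(t) = s-lim_{n→∞} e^{t(A - (V∧n)∨(−n))}` (for `t ≥ 0`). -/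
def IsAbsorptionSGE (μ : Measure Ω) (p : ℝ≥0∞) [Fact (1 ≤ p)]
    (T : ℝ → Lp ℝ p μ →L[ℝ] Lp ℝ p μ) (V : Ω → EReal)
    (TV : ℝ → Lp ℝ p μ →L[ℝ] Lp ℝ p μ) : Prop :=
  ∃ S : ℕ → ℝ → Lp ℝ p μ →L[ℝ] Lp ℝ p μ,
    (∀ n, IsPerturbedSG μ p T (S n) (truncE V n)) ∧
    ∀ t : ℝ, 0 ≤ t → ∀ f, Tendsto (fun n => S n t f) atTop (𝓝 (TV t f))

/-- `T`-admissibility for an extended-real-valued absorption rate `V`. -/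
def AdmissibleE (μ : Measure Ω) (p : ℝ≥0∞) [Fact (1 ≤ p)]
    (T : ℝ → Lp ℝ p μ →L[ℝ] Lp ℝ p μ) (V : Ω → EReal) : Prop :=
  LocallyMeasurable μ V ∧
  ∃ TV, IsAbsorptionSGE μ p T V TV ∧ IsC0Semigroup TV

end Absorption

open Absorption
namespace Absorption

/-- `V` is strongly `S`-regular: `V` is `S`-admissible and
`(S_V)_{−V} = s-lim_{n→∞} S_{V−V∧n} = S`. -/
def StronglyRegular {Ω : Type*} [MeasurableSpace Ω] (μ : Measure Ω) (p : ℝ≥0∞) [Fact (1 ≤ p)]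
    (S : ℝ → Lp ℝ p μ →L[ℝ] Lp ℝ p μ) (V : Ω → ℝ≥0∞) : Prop :=
  Admissible μ p S V ∧
  ∀ R : ℕ → ℝ → Lp ℝ p μ →L[ℝ] Lp ℝ p μ,
    (∀ n : ℕ, IsAbsorptionSG μ p S (resid V n) (R n)) →
    ∀ t : ℝ, 0 ≤ t → ∀ f : Lp ℝ p μ,
      Tendsto (fun n : ℕ => R n t f) atTop (𝓝 (S t f))

end Absorption


set_option linter.unusedSectionVars false

namespace C0

variable {E : Type*} [NormedAddCommGroup E] [NormedSpace ℝ E] [CompleteSpace E]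

lemma locBdd {T : ℝ → E →L[ℝ] E} (hT : IsC0Semigroup T) (τ : ℝ) :
    ∃ M : ℝ, 0 ≤ M ∧ ∀ t, 0 ≤ t → t ≤ τ → ‖T t‖ ≤ M := by
  have h := banach_steinhaus (g := fun i : Set.Icc (0:ℝ) τ => T i) (by
    intro x
    have hc : ContinuousOn (fun t => T t x) (Set.Icc 0 τ) :=
      (hT.2 x).mono (fun t ht => ht.1)
    obtain ⟨C, hC⟩ := isCompact_Icc.exists_bound_of_continuousOn hc
    exact ⟨C, fun i => hC i i.2⟩)
  obtain ⟨C, hC⟩ := h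
  exact ⟨max C 0, le_max_right _ _, fun t h0 h1 => (hC ⟨t, h0, h1⟩).trans (le_max_left _ _)⟩

lemma ext_cont {T : ℝ → E →L[ℝ] E} (hT : IsC0Semigroup T) (f : E) :
    Continuous (fun t : ℝ => T (max t 0) f) := by
  have := (hT.2 f).comp_continuous (f := fun t : ℝ => max t 0) (by fun_prop)
    (fun t => Set.mem_Ici.2 (le_max_right _ _))
  exact this

/-- joint continuity -/
lemma joint_cont {T : ℝ → E →L[ℝ] E} (hT : IsC0Semigroup T) :
    Continuous (fun q : ℝ × E => T (max q.1 0) q.2) := by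
  rw [continuous_iff_continuousAt]
  rintro ⟨t, x⟩
  obtain ⟨M, hM0, hM⟩ := locBdd hT (max (t + 1) 0)
  have h1 : Tendsto (fun q : ℝ × E => ‖q.2 - x‖) (𝓝 (t, x)) (𝓝 0) := by
    have : Continuous (fun q : ℝ × E => ‖q.2 - x‖) := by fun_prop
    simpa using this.tendsto (t, x)
  have h2 : Tendsto (fun q : ℝ × E => ‖T (max q.1 0) x - T (max t 0) x‖) (𝓝 (t, x)) (𝓝 0) := by
    have : Continuous (fun q : ℝ × E => ‖T (max q.1 0) x - T (max t 0) x‖) :=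
      (((ext_cont hT x).comp continuous_fst).sub continuous_const).norm
    simpa using this.tendsto (t, x)
  rw [ContinuousAt, tendsto_iff_norm_sub_tendsto_zero]
  have h3 := (h1.const_mul M).add h2
  simp only [mul_zero, add_zero] at h3
  refine squeeze_zero' (Eventually.of_forall fun _ => norm_nonneg _) ?_ h3
  have hev : ∀ᶠ q : ℝ × E in 𝓝 (t, x), q.1 < t + 1 :=
    (continuous_fst.tendsto (t, x)).eventually_lt_const (by simp)
  filter_upwards [hev] with q hq
  have : T (max q.1 0) q.2 - T (max t 0) x
      = T (max q.1 0) (q.2 - x) + (T (max q.1 0) x - T (max t 0) x) := by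
    rw [map_sub]; abel
  rw [this]
  refine (norm_add_le _ _).trans (add_le_add ?_ le_rfl)
  refine (ContinuousLinearMap.le_opNorm _ _).trans ?_
  exact mul_le_mul_of_nonneg_right
    (hM _ (le_max_right _ _) (max_le_max hq.le le_rfl)) (norm_nonneg _)

/-- convolution -/
def conv (T : ℝ → E →L[ℝ] E) (g : ℝ → E) (t : ℝ) : E :=
  ∫ s in (0:ℝ)..t, T (max (t - s) 0) (g s)

lemma conv_integrand_cont {T : ℝ → E →L[ℝ] E} (hT : IsC0Semigroup T) {g : ℝ → E}
    (hg : Continuous g) : Continuous (fun q : ℝ × ℝ => T (max (q.1 - q.2) 0) (g q.2)) :=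
  (joint_cont hT).comp
    ((continuous_fst.sub continuous_snd).prodMk (hg.comp continuous_snd))

lemma conv_cont {T : ℝ → E →L[ℝ] E} (hT : IsC0Semigroup T) {g : ℝ → E}
    (hg : Continuous g) : Continuous (conv T g) := by
  unfold conv
  exact intervalIntegral.continuous_parametric_intervalIntegral_of_continuous
    (f := fun t s => T (max (t - s) 0) (g s)) (conv_integrand_cont hT hg) continuous_id

lemma conv_ii {T : ℝ → E →L[ℝ] E} (hT : IsC0Semigroup T) {g : ℝ → E}
    (hg : Continuous g) (t a b : ℝ) :
    IntervalIntegrable (fun s => T (max (t - s) 0) (g s)) volume a b :=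
  ((conv_integrand_cont hT hg).comp (Continuous.prodMk_right t)).intervalIntegrable _ _

lemma conv_add {T : ℝ → E →L[ℝ] E} (hT : IsC0Semigroup T) {g h : ℝ → E}
    (hg : Continuous g) (hh : Continuous h) (t : ℝ) :
    conv T (fun s => g s + h s) t = conv T g t + conv T h t := by
  unfold conv
  rw [← intervalIntegral.integral_add (conv_ii hT hg t _ _) (conv_ii hT hh t _ _)]
  simp

lemma conv_sub {T : ℝ → E →L[ℝ] E} (hT : IsC0Semigroup T) {g h : ℝ → E}
    (hg : Continuous g) (hh : Continuous h) (t : ℝ) :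
    conv T (fun s => g s - h s) t = conv T g t - conv T h t := by
  unfold conv
  rw [← intervalIntegral.integral_sub (conv_ii hT hg t _ _) (conv_ii hT hh t _ _)]
  simp

lemma conv_smul (T : ℝ → E →L[ℝ] E) (g : ℝ → E) (c : ℝ) (t : ℝ) :
    conv T (fun s => c • g s) t = c • conv T g t := by
  unfold conv
  rw [← intervalIntegral.integral_smul]
  simp

lemma conv_congr (T : ℝ → E →L[ℝ] E) {g h : ℝ → E} {t : ℝ} (ht : 0 ≤ t)
    (hgh : ∀ s, 0 ≤ s → g s = h s) : conv T g t = conv T h t := by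
  unfold conv
  apply intervalIntegral.integral_congr
  intro s hs
  rw [Set.uIcc_of_le ht] at hs
  simp only [hgh s hs.1]

lemma conv_bound {T : ℝ → E →L[ℝ] E} {τ M a C : ℝ}
    (hM : ∀ t, 0 ≤ t → t ≤ τ → ‖T t‖ ≤ M) (hM0 : 0 ≤ M)
    {g : ℝ → E} {k : ℕ}
    (hgb : ∀ s, 0 ≤ s → s ≤ τ → M * ‖g s‖ ≤ a * (C * ((a * s) ^ k / k.factorial)))
    {t : ℝ} (h0 : 0 ≤ t) (h1 : t ≤ τ) :
    ‖conv T g t‖ ≤ C * ((a * t) ^ (k + 1) / (k + 1).factorial) := by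
  unfold conv
  have key : ‖∫ s in (0:ℝ)..t, T (max (t - s) 0) (g s)‖
      ≤ ∫ s in (0:ℝ)..t, a * (C * ((a * s) ^ k / k.factorial)) := by
    apply intervalIntegral.norm_integral_le_of_norm_le h0
    · refine Eventually.of_forall ?_
      intro s hs
      have hs0 : 0 ≤ s := hs.1.le
      have hst : s ≤ t := hs.2
      refine (ContinuousLinearMap.le_opNorm _ _).trans ?_
      refine le_trans ?_ (hgb s hs0 (hst.trans h1))
      apply mul_le_mul_of_nonneg_right _ (norm_nonneg _)
      apply hM _ (le_max_right _ _)
      apply max_le <;> linarith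
    · apply Continuous.intervalIntegrable; fun_prop
  refine key.trans (le_of_eq ?_)
  have : (fun s : ℝ => a * (C * ((a * s) ^ k / k.factorial)))
      = fun s => (a ^ (k+1) * C / k.factorial) * s ^ k := by
    ext s; rw [mul_pow, pow_succ]; ring
  rw [this, intervalIntegral.integral_const_mul, integral_pow, Nat.factorial_succ]
  push_cast
  have : (k.factorial : ℝ) ≠ 0 := by exact_mod_cast k.factorial_ne_zero
  have : (k : ℝ) + 1 ≠ 0 := by positivity
  field_simp
  simp [mul_pow]
  ring

/-- Dyson-Phillips terms -/
def dys (T : ℝ → E →L[ℝ] E) (B : E →L[ℝ] E) (f : E) : ℕ → ℝ → E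
  | 0 => fun t => T (max t 0) f
  | k + 1 => conv T (fun s => B (dys T B f k s))

lemma dys_cont {T : ℝ → E →L[ℝ] E} (hT : IsC0Semigroup T) (B : E →L[ℝ] E) (f : E) (k : ℕ) :
    Continuous (dys T B f k) := by
  induction k with
  | zero => exact ext_cont hT f
  | succ k ih => exact conv_cont hT (B.continuous.comp ih)

lemma dys_bound {T : ℝ → E →L[ℝ] E} (B : E →L[ℝ] E) (f : E)
    {τ M : ℝ} (hM : ∀ t, 0 ≤ t → t ≤ τ → ‖T t‖ ≤ M) (hM0 : 0 ≤ M) (k : ℕ) :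
    ∀ t, 0 ≤ t → t ≤ τ →
      ‖dys T B f k t‖ ≤ (M * ‖f‖) * ((M * ‖B‖ * t) ^ k / k.factorial) := by
  induction k with
  | zero =>
    intro t h0 h1
    simp only [dys, pow_zero, Nat.factorial_zero, Nat.cast_one, div_one, mul_one]
    refine (ContinuousLinearMap.le_opNorm _ _).trans ?_
    rw [max_eq_left h0]
    exact mul_le_mul_of_nonneg_right (hM _ h0 h1) (norm_nonneg _)
  | succ k ih =>
    intro t h0 h1
    refine conv_bound hM hM0 ?_ h0 h1
    intro s hs0 hs1
    have := ih s hs0 hs1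
    rw [mul_assoc M ‖B‖ (_ * _)]
    apply mul_le_mul_of_nonneg_left _ hM0
    refine (ContinuousLinearMap.le_opNorm _ _).trans ?_
    apply mul_le_mul_of_nonneg_left _ (norm_nonneg _)
    exact this

lemma dys_bound' {T : ℝ → E →L[ℝ] E} (B : E →L[ℝ] E) (f : E)
    {τ M : ℝ} (hM : ∀ t, 0 ≤ t → t ≤ τ → ‖T t‖ ≤ M) (hM0 : 0 ≤ M) (k : ℕ)
    (t : ℝ) (h0 : 0 ≤ t) (h1 : t ≤ τ) :
      ‖dys T B f k t‖ ≤ (M * ‖f‖) * ((M * ‖B‖ * τ) ^ k / k.factorial) := by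
  refine (dys_bound B f hM hM0 k t h0 h1).trans ?_
  have := norm_nonneg f
  have := norm_nonneg B
  gcongr

lemma dys_summable_bd (C a : ℝ) : Summable (fun k : ℕ => C * (a ^ k / k.factorial)) :=
  (Real.summable_pow_div_factorial a).mul_left C

lemma dys_summable {T : ℝ → E →L[ℝ] E} (hT : IsC0Semigroup T) (B : E →L[ℝ] E) (f : E)
    {t : ℝ} (ht : 0 ≤ t) : Summable (fun k => dys T B f k t) := by
  obtain ⟨M, hM0, hM⟩ := locBdd hT t
  exact Summable.of_norm_bounded (dys_summable_bd _ _)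
    (fun k => dys_bound B f hM hM0 k t ht le_rfl)

/-- the sum of the Dyson-Phillips series -/
def sol (T : ℝ → E →L[ℝ] E) (B : E →L[ℝ] E) (f : E) (t : ℝ) : E :=
  ∑' k, dys T B f k (max t 0)

lemma sol_hasSum {T : ℝ → E →L[ℝ] E} (hT : IsC0Semigroup T) (B : E →L[ℝ] E) (f : E)
    {t : ℝ} (ht : 0 ≤ t) : HasSum (fun k => dys T B f k t) (sol T B f t) := by
  unfold sol; rw [max_eq_left ht]
  exact (dys_summable hT B f ht).hasSum

lemma sol_cont {T : ℝ → E →L[ℝ] E} (hT : IsC0Semigroup T) (B : E →L[ℝ] E) (f : E) :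
    Continuous (sol T B f) := by
  rw [continuous_iff_continuousAt]
  intro t
  obtain ⟨M, hM0, hM⟩ := locBdd hT (max (t + 1) 0)
  have : ContinuousOn (sol T B f) (Set.Iic (t + 1)) := by
    refine continuousOn_tsum (fun k => ?_) (dys_summable_bd (M * ‖f‖) (M * ‖B‖ * (max (t+1) 0))) ?_
    · exact ((dys_cont hT B f k).comp (by fun_prop : Continuous fun t : ℝ => max t 0)).continuousOn
    · intro k s hs
      exact dys_bound' B f hM hM0 k _ (le_max_right _ _) (max_le_max hs le_rfl)
  exact this.continuousAt (Iic_mem_nhds (by linarith))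

lemma sol_duhamel {T : ℝ → E →L[ℝ] E} (hT : IsC0Semigroup T) (B : E →L[ℝ] E) (f : E)
    {t : ℝ} (ht : 0 ≤ t) :
    sol T B f t = T t f + conv T (fun s => B (sol T B f s)) t := by
  obtain ⟨M, hM0, hM⟩ := locBdd hT t
  have h1 : HasSum (fun k => dys T B f (k + 1) t) (conv T (fun s => B (sol T B f s)) t) := by
    have hci : ∀ k, Continuous (fun s => T (max (t - s) 0) (B (dys T B f k s))) := fun k =>
      (conv_integrand_cont hT (B.continuous.comp (dys_cont hT B f k))).comp
        (Continuous.prodMk_right t)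
    refine intervalIntegral.hasSum_integral_of_dominated_convergence
      (bound := fun k _ => M * (‖B‖ * ((M * ‖f‖) * ((M * ‖B‖ * t) ^ k / k.factorial))))
      (fun k => (hci k).aestronglyMeasurable) ?_ ?_ ?_ ?_
    · intro k
      refine Eventually.of_forall fun s hs => ?_
      rw [Set.uIoc_of_le ht] at hs
      refine (ContinuousLinearMap.le_opNorm _ _).trans ?_
      refine mul_le_mul (hM _ (le_max_right _ _) (max_le (by linarith [hs.1]) ht)) ?_
        (norm_nonneg _) hM0
      refine (ContinuousLinearMap.le_opNorm _ _).trans ?_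
      exact mul_le_mul_of_nonneg_left (dys_bound' B f hM hM0 k s hs.1.le hs.2) (norm_nonneg _)
    · refine Eventually.of_forall fun s hs => ?_
      exact ((dys_summable_bd _ _).mul_left _).mul_left _
    · exact intervalIntegrable_const
    · refine Eventually.of_forall fun s hs => ?_
      rw [Set.uIoc_of_le ht] at hs
      exact ((sol_hasSum hT B f hs.1.le).mapL B).mapL (T (max (t - s) 0))
  have h2 := sol_hasSum hT B f ht
  have h3 := (hasSum_nat_add_iff' 1).2 h2
  have := h1.unique h3
  rw [this]
  simp [dys, max_eq_left ht]

lemma volterra_unique {T : ℝ → E →L[ℝ] E} (hT : IsC0Semigroup T) (B : E →L[ℝ] E)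
    {v : ℝ → E} (hv : Continuous v)
    (h : ∀ t, 0 ≤ t → v t = conv T (fun s => B (v s)) t) : ∀ t, 0 ≤ t → v t = 0 := by
  intro t ht
  obtain ⟨M, hM0, hM⟩ := locBdd hT t
  obtain ⟨C, hC⟩ := (isCompact_Icc (a := (0:ℝ)) (b := t)).exists_bound_of_continuousOn hv.continuousOn
  have key : ∀ k : ℕ, ∀ s, 0 ≤ s → s ≤ t → ‖v s‖ ≤ C * ((M * ‖B‖ * s) ^ k / k.factorial) := by
    intro k
    induction k with
    | zero => intro s h0 h1; simpa using hC s ⟨h0, h1⟩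
    | succ k ih =>
      intro s h0 h1
      rw [h s h0]
      refine conv_bound hM hM0 ?_ h0 h1
      intro r hr0 hr1
      have := ih r hr0 hr1
      calc M * ‖B (v r)‖ ≤ M * (‖B‖ * ‖v r‖) :=
            mul_le_mul_of_nonneg_left (ContinuousLinearMap.le_opNorm _ _) hM0
        _ = (M * ‖B‖) * ‖v r‖ := by ring
        _ ≤ _ := mul_le_mul_of_nonneg_left this (mul_nonneg hM0 (norm_nonneg _))
  have hlim : Tendsto (fun k : ℕ => C * ((M * ‖B‖ * t) ^ k / k.factorial)) atTop (𝓝 0) := by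
    exact (dys_summable_bd _ _).tendsto_atTop_zero
  have : ‖v t‖ ≤ 0 := ge_of_tendsto' hlim (fun k => key k t ht le_rfl)
  exact norm_le_zero_iff.1 this

lemma duhamel_unique {T : ℝ → E →L[ℝ] E} (hT : IsC0Semigroup T) (B : E →L[ℝ] E) (f : E)
    {u : ℝ → E} (hu : Continuous u)
    (h : ∀ t, 0 ≤ t → u t = T t f + conv T (fun s => B (u s)) t) {t : ℝ} (ht : 0 ≤ t) :
    u t = sol T B f t := by
  have := volterra_unique hT B (v := fun s => u s - sol T B f s) (hu.sub (sol_cont hT B f)) (by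
    intro s hs
    simp only [map_sub]
    have h1 := conv_sub hT (g := fun s => B (u s)) (h := fun s => B (sol T B f s))
      (B.continuous.comp hu) (B.continuous.comp (sol_cont hT B f)) s
    rw [h1, h s hs, sol_duhamel hT B f hs]
    simp) t ht
  exact sub_eq_zero.1 this

/-- the perturbed semigroup -/
lemma sol_add {T : ℝ → E →L[ℝ] E} (hT : IsC0Semigroup T) (B : E →L[ℝ] E) (f g : E)
    {t : ℝ} (ht : 0 ≤ t) : sol T B (f + g) t = sol T B f t + sol T B g t := by
  refine (duhamel_unique hT B (f + g) (u := fun t => sol T B f t + sol T B g t)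
    ((sol_cont hT B f).add (sol_cont hT B g)) ?_ ht).symm
  intro s hs
  simp only [map_add]
  rw [conv_add hT (g := fun s => B (sol T B f s)) (h := fun s => B (sol T B g s))
    (B.continuous.comp (sol_cont hT B f)) (B.continuous.comp (sol_cont hT B g)),
    sol_duhamel hT B f hs, sol_duhamel hT B g hs]
  abel

lemma sol_smul {T : ℝ → E →L[ℝ] E} (hT : IsC0Semigroup T) (B : E →L[ℝ] E) (c : ℝ) (f : E)
    {t : ℝ} (ht : 0 ≤ t) : sol T B (c • f) t = c • sol T B f t := by
  refine (duhamel_unique hT B (c • f) (u := fun t => c • sol T B f t)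
    ((sol_cont hT B f).const_smul c) ?_ ht).symm
  intro s hs
  simp only [map_smul]
  rw [conv_smul, sol_duhamel hT B f hs, smul_add]

lemma sol_max (T : ℝ → E →L[ℝ] E) (B : E →L[ℝ] E) (f : E) (t : ℝ) :
    sol T B f (max t 0) = sol T B f t := by
  unfold sol; simp

lemma exists_sg {T : ℝ → E →L[ℝ] E} (hT : IsC0Semigroup T) (B : E →L[ℝ] E) :
    ∃ S : ℝ → E →L[ℝ] E, ∀ t f, S t f = sol T B f t := by
  have : ∀ t, ∃ S : E →L[ℝ] E, ∀ f, S f = sol T B f t := by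
    intro t
    let L : E →ₗ[ℝ] E :=
      { toFun := fun f => sol T B f (max t 0)
        map_add' := fun f g => sol_add hT B f g (le_max_right _ _)
        map_smul' := fun c f => sol_smul hT B c f (le_max_right _ _) }
    obtain ⟨M, hM0, hM⟩ := locBdd hT (max t 0)
    refine ⟨L.mkContinuousOfExistsBound
      ⟨∑' k : ℕ, M * ((M * ‖B‖ * (max t 0)) ^ k / k.factorial), fun f => ?_⟩, fun f => ?_⟩
    · change ‖sol T B f (max t 0)‖ ≤ _
      rw [mul_comm, ← tsum_mul_left]
      unfold sol
      simp only [max_self, max_assoc]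
      refine tsum_of_norm_bounded (Summable.hasSum ((dys_summable_bd _ _).mul_left _)) ?_
      intro k
      refine (dys_bound B f hM hM0 k _ (le_max_right _ _) le_rfl).trans (le_of_eq (by ring))
    · exact sol_max T B f t
  choose S hS using this
  exact ⟨S, hS⟩

end C0

set_option linter.unusedSectionVars false
namespace C0

variable {E : Type*} [NormedAddCommGroup E] [NormedSpace ℝ E] [CompleteSpace E]

lemma avg {F : ℝ → ℝ → E} (hF : Continuous (fun q : ℝ × ℝ => F q.1 q.2)) :
    Tendsto (fun t : ℝ => t⁻¹ • ∫ s in (0:ℝ)..t, F t s) (𝓝[>] (0:ℝ)) (𝓝 (F 0 0)) := by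
  rw [Metric.tendsto_nhds]
  intro ε hε
  have h1 := hF.tendsto (0, 0)
  rw [Metric.tendsto_nhds] at h1
  obtain ⟨δ, hδ, h2⟩ := Metric.eventually_nhds_iff.1 (h1 (ε / 2) (by positivity))
  have : ∀ᶠ t in 𝓝[>] (0:ℝ), t ∈ Set.Ioo 0 δ := Ioo_mem_nhdsGT hδ
  filter_upwards [this] with t ht
  have hcont : Continuous (F t) := hF.comp (Continuous.prodMk_right t)
  have e1 : t⁻¹ • (∫ s in (0:ℝ)..t, F t s) - F 0 0
      = t⁻¹ • ∫ s in (0:ℝ)..t, (F t s - F 0 0) := by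
    rw [intervalIntegral.integral_sub (hcont.intervalIntegrable _ _) intervalIntegrable_const,
      intervalIntegral.integral_const, sub_zero, smul_sub, smul_smul, inv_mul_cancel₀ ht.1.ne',
      one_smul]
  rw [dist_eq_norm, e1, norm_smul]
  have e2 : ‖∫ s in (0:ℝ)..t, (F t s - F 0 0)‖ ≤ (ε / 2) * |t - 0| := by
    apply intervalIntegral.norm_integral_le_of_norm_le_const
    intro s hs
    rw [Set.uIoc_of_le ht.1.le] at hs
    have := h2 (y := (t, s)) (by
      rw [Prod.dist_eq]
      simp only [Real.dist_eq, sub_zero]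
      rw [abs_of_pos ht.1, abs_of_pos hs.1]
      exact max_lt ht.2 (hs.2.trans_lt ht.2))
    rw [dist_eq_norm] at this
    exact this.le
  rw [sub_zero, abs_of_pos ht.1] at e2
  rw [Real.norm_eq_abs, abs_of_pos (inv_pos.2 ht.1)]
  calc t⁻¹ * ‖∫ s in (0:ℝ)..t, (F t s - F 0 0)‖ ≤ t⁻¹ * (ε / 2 * t) :=
        mul_le_mul_of_nonneg_left e2 (inv_pos.2 ht.1).le
    _ = ε / 2 := by have := ht.1.ne'; field_simp
    _ < ε := by linarith

/-- `S` has generator `A + B`. -/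
def Pert (T S : ℝ → E →L[ℝ] E) (B : E →L[ℝ] E) : Prop :=
  IsC0Semigroup S ∧ ∀ f g, InGenerator S f g ↔ InGenerator T f (g - B f)

lemma Pert.trans {T S R : ℝ → E →L[ℝ] E} {B C : E →L[ℝ] E} (h1 : Pert T S B) (h2 : Pert S R C) :
    Pert T R (B + C) := by
  refine ⟨h2.1, fun f g => ?_⟩
  rw [h2.2, h1.2]
  have : g - C f - B f = g - (B + C) f := by
    simp only [_root_.add_apply]; abel
  rw [this]

lemma Pert.symm {T S : ℝ → E →L[ℝ] E} {B : E →L[ℝ] E} (hT : IsC0Semigroup T) (h1 : Pert T S B) :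
    Pert S T (-B) := by
  refine ⟨hT, fun f g => ?_⟩
  rw [h1.2]
  simp

lemma gen_of_duhamel {T S : ℝ → E →L[ℝ] E} {B : E →L[ℝ] E} (hT : IsC0Semigroup T)
    (hS : IsC0Semigroup S) (f : E)
    (hd : ∀ t, 0 ≤ t → S t f = T t f + conv T (fun s => B (S (max s 0) f)) t) (g : E) :
    InGenerator S f g ↔ InGenerator T f (g - B f) := by
  have hc := conv_integrand_cont hT (B.continuous.comp (ext_cont hS f))
  have h1 := avg (F := fun t s => T (max (t - s) 0) (B (S (max s 0) f))) hc
  simp only [sub_self, max_self, hT.1.1, hS.1.1, ContinuousLinearMap.id_apply] at h1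
  have key : ∀ᶠ t in 𝓝[>] (0:ℝ), t⁻¹ • (S t f - f) = t⁻¹ • (T t f - f) +
      t⁻¹ • ∫ s in (0:ℝ)..t, T (max (t - s) 0) (B (S (max s 0) f)) := by
    filter_upwards [self_mem_nhdsWithin] with t ht
    rw [hd t (le_of_lt ht), ← smul_add]
    unfold conv
    congr 1; abel
  unfold InGenerator
  rw [tendsto_congr' key]
  constructor
  · intro h
    have := h.sub h1
    simpa using this
  · intro h
    have := h.add h1
    simpa using this

lemma exists_pert {T : ℝ → E →L[ℝ] E} (hT : IsC0Semigroup T) (B : E →L[ℝ] E) :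
    ∃ S : ℝ → E →L[ℝ] E, Pert T S B ∧ ∀ t f, S t f = sol T B f t := by
  obtain ⟨S, hS⟩ := exists_sg hT B
  have hC0 : IsC0Semigroup S := by
    refine ⟨⟨?_, ?_⟩, ?_⟩
    · ext f
      rw [hS, sol_duhamel hT B f le_rfl, hT.1.1]
      simp [conv]
    · intro r t hr ht
      rw [add_comm]
      ext f
      simp only [ContinuousLinearMap.comp_apply]
      rw [hS r, hS t, hS (t + r)]
      have hu : Continuous (fun r => sol T B f (t + max r 0)) :=
        (sol_cont hT B f).comp (by fun_prop)
      have := duhamel_unique hT B (sol T B f t) (u := fun r => sol T B f (t + max r 0)) hu ?_ hr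
      · simpa [max_eq_left hr] using this
      · intro r hr
        rw [max_eq_left hr, sol_duhamel hT B f (add_nonneg ht hr), sol_duhamel hT B f ht, map_add]
        have hg : Continuous (fun s => B (sol T B f s)) := B.continuous.comp (sol_cont hT B f)
        have e1 : T (t + r) f = T r (T t f) := by
          rw [add_comm, hT.1.2 r t hr ht]; rfl
        have e2 : conv T (fun s => B (sol T B f s)) (t + r) = T r (conv T (fun s => B (sol T B f s)) t)
            + conv T (fun s => B (sol T B f (t + max s 0))) r := by
          unfold conv
          rw [← intervalIntegral.integral_add_adjacent_intervals
            (conv_ii hT hg (t + r) 0 t) (conv_ii hT hg (t + r) t (t + r))]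
          congr 1
          · rw [← ContinuousLinearMap.intervalIntegral_comp_comm _ (conv_ii hT hg t 0 t)]
            apply intervalIntegral.integral_congr
            intro s hs
            rw [Set.uIcc_of_le ht] at hs
            simp only
            rw [max_eq_left (by linarith [hs.2] : 0 ≤ t + r - s),
              max_eq_left (by linarith [hs.2] : 0 ≤ t - s),
              show t + r - s = r + (t - s) by ring, hT.1.2 r (t - s) hr (by linarith [hs.2])]
            rfl
          · have := intervalIntegral.integral_comp_add_left
              (fun s => T (max (t + r - s) 0) (B (sol T B f s))) t (a := 0) (b := r)
            rw [add_zero] at this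
            rw [← this]
            apply intervalIntegral.integral_congr
            intro s hs
            rw [Set.uIcc_of_le hr] at hs
            simp only
            rw [max_eq_left hs.1, show t + r - (t + s) = r - s by ring]
        rw [e1, e2]; abel
    · intro f
      simp only [hS]
      exact (sol_cont hT B f).continuousOn
  refine ⟨S, ⟨hC0, fun f g => ?_⟩, hS⟩
  apply gen_of_duhamel hT hC0
  intro t ht
  simp only [hS, sol_max]
  exact sol_duhamel hT B f ht

lemma gen_invariant {S : ℝ → E →L[ℝ] E} (hS : IsC0Semigroup S) {f g : E}
    (h : InGenerator S f g) {r : ℝ} (hr : 0 ≤ r) : InGenerator S (S r f) (S r g) := by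
  have := ((S r).continuous.tendsto _).comp h
  refine this.congr' ?_
  filter_upwards [self_mem_nhdsWithin] with t ht
  have e : S t (S r f) = S r (S t f) := by
    change ((S t).comp (S r)) f = ((S r).comp (S t)) f
    rw [← hS.1.2 t r (le_of_lt ht) hr, ← hS.1.2 r t hr (le_of_lt ht), add_comm]
  simp only [Function.comp, map_smul, map_sub, e]

lemma gen_integral {S : ℝ → E →L[ℝ] E} (hS : IsC0Semigroup S) (f : E) {h : ℝ} (hh : 0 ≤ h) :
    InGenerator S (∫ s in (0:ℝ)..h, S (max s 0) f) (S h f - f) := by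
  have hc := ext_cont hS f
  have a1 := avg (F := fun t s => S (max (h + s) 0) f)
    (by exact hc.comp (continuous_const.add continuous_snd))
  have a2 := avg (F := fun t s => S (max s 0) f) (by exact hc.comp continuous_snd)
  have a3 := a1.sub a2
  simp only [add_zero, max_eq_left hh, max_self, hS.1.1, ContinuousLinearMap.id_apply] at a3
  refine a3.congr' ?_
  filter_upwards [self_mem_nhdsWithin] with t ht
  have ht : 0 < t := ht
  rw [← smul_sub]
  congr 1
  rw [intervalIntegral.integral_comp_add_left (fun s => S (max s 0) f) h, add_zero,
    ← ContinuousLinearMap.intervalIntegral_comp_comm _ (hc.intervalIntegrable _ _)]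
  have e : ∫ s in (0:ℝ)..h, S t (S (max s 0) f) = ∫ s in t..(t + h), S (max s 0) f := by
    have := intervalIntegral.integral_comp_add_left (fun s => S (max s 0) f) t (a := 0) (b := h)
    rw [add_zero] at this
    rw [← this]
    apply intervalIntegral.integral_congr
    intro s hs
    rw [Set.uIcc_of_le hh] at hs
    simp only
    rw [max_eq_left hs.1, max_eq_left (by linarith [hs.1]), hS.1.2 t s ht.le hs.1]
    rfl
  rw [e]
  have i : ∀ a b, IntervalIntegrable (fun s => S (max s 0) f) volume a b :=
    fun a b => hc.intervalIntegrable _ _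
  have j1 := intervalIntegral.integral_add_adjacent_intervals (i 0 t) (i t (t+h))
  have j2 := intervalIntegral.integral_add_adjacent_intervals (i 0 h) (i h (h+t))
  rw [add_comm t h] at j1 ⊢
  rw [sub_eq_sub_iff_add_eq_add, add_comm (∫ s in h..(h + t), S (max s 0) f), j2,
    add_comm (∫ s in t..(h + t), S (max s 0) f), j1]

lemma sg_unique_dom {S S' : ℝ → E →L[ℝ] E} (hS : IsC0Semigroup S) (hS' : IsC0Semigroup S')
    (h : ∀ f g, InGenerator S f g → InGenerator S' f g) {f g : E} (hf : InGenerator S f g)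
    {t : ℝ} (ht : 0 ≤ t) : S t f = S' t f := by
  set v : ℝ → E := fun s => S' (max (t - s) 0) (S (max s 0) f) with hv
  have hvc : Continuous v := (joint_cont hS').comp
    ((continuous_const.sub continuous_id).prodMk (ext_cont hS f))
  have hd : ∀ x ∈ Set.Ico 0 t, HasDerivWithinAt v 0 (Set.Ici x) x := by
    intro x hx
    rw [← hasDerivWithinAt_Ioi_iff_Ici, hasDerivWithinAt_iff_tendsto_slope' (by simp)]
    set z := S x f with hz
    have g1 : InGenerator S z (S x g) := gen_invariant hS hf hx.1
    have g2 := h _ _ g1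
    have sh : Tendsto (fun y => y - x) (𝓝[>] x) (𝓝[>] (0:ℝ)) := by
      apply tendsto_nhdsWithin_of_tendsto_nhds_of_eventually_within
      · have : Continuous (fun y => y - x) := by fun_prop
        have := this.tendsto x
        rw [sub_self] at this
        exact this.mono_left nhdsWithin_le_nhds
      · filter_upwards [self_mem_nhdsWithin] with y hy
        exact Set.mem_Ioi.2 (sub_pos.2 (Set.mem_Ioi.1 hy))
    have g3 := (g1.comp sh).sub (g2.comp sh)
    rw [sub_self] at g3
    have g4 : Tendsto (fun y : ℝ => t - y) (𝓝[>] x) (𝓝 (t - x)) :=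
      ((by fun_prop : Continuous (fun y : ℝ => t - y)).tendsto x).mono_left nhdsWithin_le_nhds
    have g5 := ((joint_cont hS').tendsto (t - x, 0)).comp (g4.prodMk_nhds g3)
    simp only [map_zero] at g5
    refine g5.congr' ?_
    have : ∀ᶠ y in 𝓝[>] x, y ∈ Set.Ioo x t := Ioo_mem_nhdsGT hx.2
    filter_upwards [this] with y hy
    simp only [Function.comp, slope, vsub_eq_sub, hv]
    rw [← smul_sub, map_smul]
    congr 1
    rw [max_eq_left (by linarith [hy.2] : 0 ≤ t - y),
      max_eq_left (by linarith [hx.2] : 0 ≤ t - x),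
      max_eq_left (by linarith [hy.1, hx.1] : 0 ≤ y), max_eq_left hx.1]
    have e1 : S y f = S (y - x) z := by
      rw [hz, ← ContinuousLinearMap.comp_apply, ← hS.1.2 _ _ (by linarith [hy.1]) hx.1,
        sub_add_cancel]
    have e2 : S' (t - x) (S x f) = S' (t - y) (S' (y - x) z) := by
      have e3 := hS'.1.2 (t - y) (y - x) (by linarith [hy.2]) (by linarith [hy.1])
      rw [sub_add_sub_cancel] at e3
      rw [e3]; rfl
    rw [e1, e2, ← map_sub]
    congr 1; abel
  have := constant_of_has_deriv_right_zero hvc.continuousOn hd t ⟨ht, le_rfl⟩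
  simp only [hv, sub_self, max_self, sub_zero, max_eq_left ht, hS.1.1, hS'.1.1,
    ContinuousLinearMap.id_apply] at this
  exact this

lemma sg_unique {S S' : ℝ → E →L[ℝ] E} (hS : IsC0Semigroup S) (hS' : IsC0Semigroup S')
    (h : ∀ f g, InGenerator S f g → InGenerator S' f g)
    {t : ℝ} (ht : 0 ≤ t) : S t = S' t := by
  ext f
  have a := avg (F := fun t s => S (max s 0) f) ((ext_cont hS f).comp continuous_snd)
  simp only [max_self, hS.1.1, ContinuousLinearMap.id_apply] at a
  have b1 := ((S t).continuous.tendsto _).comp a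
  have b2 := ((S' t).continuous.tendsto _).comp a
  refine tendsto_nhds_unique b1 (b2.congr' ?_)
  filter_upwards [self_mem_nhdsWithin] with r hr
  simp only [Function.comp, map_smul]
  rw [sg_unique_dom hS hS' h (gen_integral hS f (le_of_lt hr)) ht]

lemma Pert.unique {T S S' : ℝ → E →L[ℝ] E} {B : E →L[ℝ] E} (h : Pert T S B) (h' : Pert T S' B)
    {t : ℝ} (ht : 0 ≤ t) : S t = S' t :=
  sg_unique h.1 h'.1 (fun f g hfg => (h'.2 f g).2 ((h.2 f g).1 hfg)) ht

lemma Pert.eq_sol {T S : ℝ → E →L[ℝ] E} {B : E →L[ℝ] E} (hT : IsC0Semigroup T) (h : Pert T S B)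
    {t : ℝ} (ht : 0 ≤ t) (f : E) : S t f = sol T B f t := by
  obtain ⟨S', h', e⟩ := exists_pert hT B
  rw [h.unique h' ht, e]

lemma Pert.duhamel {T S : ℝ → E →L[ℝ] E} {B : E →L[ℝ] E} (hT : IsC0Semigroup T) (h : Pert T S B)
    {t : ℝ} (ht : 0 ≤ t) (f : E) :
    S t f = T t f + conv T (fun s => B (S (max s 0) f)) t := by
  rw [h.eq_sol hT ht, sol_duhamel hT B f ht]
  congr 1
  apply conv_congr T ht
  intro s hs
  rw [h.eq_sol hT (le_max_right _ _), sol_max]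

lemma pert_scale {S : ℝ → E →L[ℝ] E} (hS : IsC0Semigroup S) (c : ℝ) :
    Pert S (fun t => Real.exp (c * t) • S t) (c • ContinuousLinearMap.id ℝ E) := by
  refine ⟨⟨⟨?_, ?_⟩, ?_⟩, ?_⟩
  · simp [hS.1.1]
  · intro s t hs ht
    ext f
    simp only [hS.1.2 s t hs ht, mul_add, Real.exp_add, _root_.smul_apply,
      ContinuousLinearMap.comp_apply, map_smul, smul_smul]
    rw [mul_comm]
  · intro f
    simp only [_root_.smul_apply]
    exact (by fun_prop : Continuous (fun t => Real.exp (c * t))).continuousOn.smul (hS.2 f)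
  · intro f g
    have hder : HasDerivAt (fun t => Real.exp (c * t)) c 0 := by
      have := ((hasDerivAt_id (0:ℝ)).const_mul c).exp
      simpa using this
    have h1 : Tendsto (fun t : ℝ => t⁻¹ * (Real.exp (c * t) - 1)) (𝓝[>] (0:ℝ)) (𝓝 c) := by
      have := hder.hasDerivWithinAt (s := Set.Ioi (0:ℝ))
      rw [hasDerivWithinAt_iff_tendsto_slope' (by simp)] at this
      refine this.congr ?_
      intro t
      simp [slope]
    have h2 : Tendsto (fun t : ℝ => S t f) (𝓝[>] (0:ℝ)) (𝓝 f) := by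
      have := (ext_cont hS f).tendsto 0
      simp only [max_self, hS.1.1, ContinuousLinearMap.id_apply] at this
      refine (this.mono_left nhdsWithin_le_nhds).congr' ?_
      filter_upwards [self_mem_nhdsWithin] with t ht
      rw [max_eq_left (le_of_lt ht)]
    have h3 := h1.smul h2
    unfold InGenerator
    have e : ∀ t : ℝ, t⁻¹ • ((Real.exp (c * t) • S t) f - f) =
        t⁻¹ • (S t f - f) + (t⁻¹ * (Real.exp (c * t) - 1)) • S t f := by
      intro t
      simp only [_root_.smul_apply, smul_sub, mul_sub, sub_smul, mul_smul, mul_one]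
      abel
    simp only [e]
    constructor
    · intro h
      simpa using h.sub h3
    · intro h
      simpa using h.add h3

end C0

set_option linter.unusedSectionVars false
namespace C0

variable {E : Type*} [NormedAddCommGroup E] [NormedSpace ℝ E] [CompleteSpace E]
  [Lattice E] [HasSolidNorm E] [IsOrderedAddMonoid E] [IsOrderedModule ℝ E]

/-- positive operator -/
def PosOp (B : E →L[ℝ] E) : Prop := ∀ f, 0 ≤ f → 0 ≤ B f

/-- positive family -/
def PosF (T : ℝ → E →L[ℝ] E) : Prop := ∀ t, 0 ≤ t → ∀ f, 0 ≤ f → 0 ≤ T t f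

/-- domination of families -/
def LeF (S T : ℝ → E →L[ℝ] E) : Prop := ∀ t, 0 ≤ t → ∀ f, 0 ≤ f → S t f ≤ T t f

lemma LeF.trans {S T R : ℝ → E →L[ℝ] E} (h : LeF S T) (h' : LeF T R) : LeF S R :=
  fun t ht f hf => (h t ht f hf).trans (h' t ht f hf)

lemma PosF.of_le {S T : ℝ → E →L[ℝ] E} (hS : PosF S) (h : LeF S T) : PosF T :=
  fun t ht f hf => (hS t ht f hf).trans (h t ht f hf)

lemma PosOp.mono {B : E →L[ℝ] E} (hB : PosOp B) {f g : E} (h : f ≤ g) : B f ≤ B g := by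
  have := hB (g - f) (sub_nonneg.2 h)
  rw [map_sub] at this
  exact sub_nonneg.1 this

lemma conv_nonneg {T : ℝ → E →L[ℝ] E} (hT : PosF T) {g : ℝ → E}
    (hg : ∀ s, 0 ≤ s → 0 ≤ g s) {t : ℝ} (ht : 0 ≤ t) : 0 ≤ conv T g t := by
  unfold conv
  rw [intervalIntegral.integral_of_le ht]
  apply MeasureTheory.integral_nonneg_of_ae
  filter_upwards [ae_restrict_mem measurableSet_Ioc] with s hs
  exact hT _ (le_max_right _ _) _ (hg s hs.1.le)

lemma conv_mono {T T' : ℝ → E →L[ℝ] E} (hC : IsC0Semigroup T) (hC' : IsC0Semigroup T')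
    (hT' : PosF T') (hTT : LeF T T') {g g' : ℝ → E}
    (hgc : Continuous g) (hgc' : Continuous g')
    (hg : ∀ s, 0 ≤ s → 0 ≤ g s) (hgg : ∀ s, 0 ≤ s → g s ≤ g' s) {t : ℝ} (ht : 0 ≤ t) :
    conv T g t ≤ conv T' g' t := by
  unfold conv
  rw [← sub_nonneg, ← intervalIntegral.integral_sub (conv_ii hC' hgc' _ _ _) (conv_ii hC hgc _ _ _),
    intervalIntegral.integral_of_le ht]
  apply MeasureTheory.integral_nonneg_of_ae
  filter_upwards [ae_restrict_mem measurableSet_Ioc] with s hs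
  refine sub_nonneg.2 ((hTT _ (le_max_right _ _) _ (hg s hs.1.le)).trans ?_)
  exact PosOp.mono (hT' _ (le_max_right _ _)) (hgg s hs.1.le)

lemma dys_nonneg {T : ℝ → E →L[ℝ] E} (hT : PosF T) {B : E →L[ℝ] E} (hB : PosOp B)
    {f : E} (hf : 0 ≤ f) (k : ℕ) : ∀ t, 0 ≤ t → 0 ≤ dys T B f k t := by
  induction k with
  | zero => intro t ht; exact hT _ (le_max_right _ _) f hf
  | succ k ih => intro t ht; exact conv_nonneg hT (fun s hs => hB _ (ih s hs)) ht

lemma dys_mono {T T' : ℝ → E →L[ℝ] E} (hC : IsC0Semigroup T) (hC' : IsC0Semigroup T')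
    (hT : PosF T) (hTT : LeF T T')
    {B : E →L[ℝ] E} (hB : PosOp B)
    {f : E} (hf : 0 ≤ f) (k : ℕ) : ∀ t, 0 ≤ t → dys T B f k t ≤ dys T' B f k t := by
  induction k with
  | zero => intro t ht; exact hTT _ (le_max_right _ _) f hf
  | succ k ih =>
    intro t ht
    exact conv_mono hC hC' (hT.of_le hTT) hTT (B.continuous.comp (dys_cont hC B f k))
      (B.continuous.comp (dys_cont hC' B f k))
      (fun s hs => hB _ (dys_nonneg hT hB hf k s hs)) (fun s hs => hB.mono (ih s hs)) ht

lemma Pert.le_of_pos {T S : ℝ → E →L[ℝ] E} {B : E →L[ℝ] E} (hC : IsC0Semigroup T)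
    (hT : PosF T) (hB : PosOp B) (h : Pert T S B) : LeF T S := by
  intro t ht f hf
  rw [h.eq_sol hC ht]
  have hs := sol_hasSum hC B f ht
  have := hs.summable.sum_le_tsum {0} (fun k _ => dys_nonneg hT hB hf k t ht)
  rw [hs.tsum_eq] at this
  simpa [dys, max_eq_left ht] using this

lemma Pert.mono_pos {T S T' S' : ℝ → E →L[ℝ] E} {B : E →L[ℝ] E} (hC : IsC0Semigroup T)
    (hC' : IsC0Semigroup T') (hT : PosF T) (hTT : LeF T T') (hB : PosOp B)
    (h : Pert T S B) (h' : Pert T' S' B) : LeF S S' := by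
  intro t ht f hf
  rw [h.eq_sol hC ht, h'.eq_sol hC' ht]
  exact hasSum_le (fun k => dys_mono hC hC' hT hTT hB hf k t ht) (sol_hasSum hC B f ht)
    (sol_hasSum hC' B f ht)

lemma LeF.of_scale {S T : ℝ → E →L[ℝ] E} {c : ℝ}
    (h : LeF (fun t => Real.exp (c * t) • S t) (fun t => Real.exp (c * t) • T t)) : LeF S T := by
  intro t ht f hf
  have := h t ht f hf
  simp only [_root_.smul_apply] at this
  have h2 := smul_le_smul_of_nonneg_left this (Real.exp_pos (-(c * t))).le
  simpa [smul_smul, ← Real.exp_add] using h2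

lemma Pert.mono {T S T' S' : ℝ → E →L[ℝ] E} {B : E →L[ℝ] E} (hC : IsC0Semigroup T)
    (hC' : IsC0Semigroup T') (hT : PosF T) (hTT : LeF T T') {c : ℝ}
    (hB : PosOp (B + c • ContinuousLinearMap.id ℝ E))
    (h : Pert T S B) (h' : Pert T' S' B) : LeF S S' :=
  LeF.of_scale (c := c) (Pert.mono_pos hC hC' hT hTT hB (h.trans (pert_scale h.1 c))
    (h'.trans (pert_scale h'.1 c)))

lemma Pert.pos {T S : ℝ → E →L[ℝ] E} {B : E →L[ℝ] E} (hC : IsC0Semigroup T)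
    (hT : PosF T) {c : ℝ} (hB : PosOp (B + c • ContinuousLinearMap.id ℝ E))
    (h : Pert T S B) : PosF S := by
  have h1 := Pert.le_of_pos hC hT hB (h.trans (pert_scale h.1 c))
  intro t ht f hf
  have := (hT t ht f hf).trans (h1 t ht f hf)
  simp only [_root_.smul_apply] at this
  have h2 := smul_nonneg (Real.exp_pos (-(c * t))).le this
  simpa [smul_smul, ← Real.exp_add] using h2

lemma Pert.le_of_neg {T S : ℝ → E →L[ℝ] E} {D : E →L[ℝ] E} (hC : IsC0Semigroup T)
    (hT : PosF T) (hD : PosOp D) {c : ℝ} (hc : PosOp (-D + c • ContinuousLinearMap.id ℝ E))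
    (h : Pert T S (-D)) : LeF S T := by
  have := (h.symm hC)
  rw [neg_neg] at this
  exact this.le_of_pos h.1 (h.pos hC hT hc) hD

lemma convex {T S1 S2 : ℝ → E →L[ℝ] E} {D : E →L[ℝ] E} (hC : IsC0Semigroup T)
    (hT : PosF T) (hD : PosOp D) {c : ℝ} (hc : PosOp (-D + c • ContinuousLinearMap.id ℝ E))
    {ε : ℝ} (hε : 0 ≤ ε) (h1 : Pert T S1 (-D)) (h2 : Pert T S2 (ε • D))
    {t : ℝ} (ht : 0 ≤ t) {f : E} (hf : 0 ≤ f) :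
    (1 + ε) • T t f ≤ ε • S1 t f + S2 t f := by
  have l1 : LeF S1 T := h1.le_of_neg hC hT hD hc
  have p1 : PosF S1 := h1.pos hC hT hc
  have hD' : PosOp (ε • D) := fun f hf => smul_nonneg hε (hD f hf)
  have l2 : LeF T S2 := h2.le_of_pos hC hT hD'
  have d1 := h1.duhamel hC ht f
  have d2 := h2.duhamel hC ht f
  have cT : Continuous (fun s => D (T (max s 0) f)) := D.continuous.comp (ext_cont hC f)
  have c1 : Continuous (fun s => D (S1 (max s 0) f)) := D.continuous.comp (ext_cont h1.1 f)
  have c2 : Continuous (fun s => D (S2 (max s 0) f)) := D.continuous.comp (ext_cont h2.1 f)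
  have e1 : conv T (fun s => (-D) (S1 (max s 0) f)) t = (-1 : ℝ) • conv T (fun s => D (S1 (max s 0) f)) t := by
    rw [← conv_smul]; simp
  have e2 : conv T (fun s => (ε • D) (S2 (max s 0) f)) t = ε • conv T (fun s => D (S2 (max s 0) f)) t := by
    rw [← conv_smul]; simp
  rw [e1] at d1
  rw [e2] at d2
  have rT : LeF T T := fun _ _ _ _ => le_rfl
  have m1 : conv T (fun s => D (S1 (max s 0) f)) t ≤ conv T (fun s => D (T (max s 0) f)) t :=
    conv_mono hC hC hT rT c1 cT (fun s hs => hD _ (p1 _ (le_max_right _ _) f hf))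
      (fun s hs => hD.mono (l1 _ (le_max_right _ _) f hf)) ht
  have m2 : conv T (fun s => D (T (max s 0) f)) t ≤ conv T (fun s => D (S2 (max s 0) f)) t :=
    conv_mono hC hC hT rT cT c2 (fun s hs => hD _ (hT _ (le_max_right _ _) f hf))
      (fun s hs => hD.mono (l2 _ (le_max_right _ _) f hf)) ht
  have m3 := smul_le_smul_of_nonneg_left (m1.trans m2) hε
  rw [d1, d2]
  have : ε • (T t f + (-1 : ℝ) • conv T (fun s => D (S1 (max s 0) f)) t)
      + (T t f + ε • conv T (fun s => D (S2 (max s 0) f)) t)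
      = (1 + ε) • T t f + (ε • conv T (fun s => D (S2 (max s 0) f)) t
        - ε • conv T (fun s => D (S1 (max s 0) f)) t) := by
    module
  rw [this]
  exact le_add_of_nonneg_right (sub_nonneg.2 m3)

lemma norm_le_of_le {S T : ℝ → E →L[ℝ] E} (hS : PosF S) (h : LeF S T) {t : ℝ} (ht : 0 ≤ t) (f : E) :
    ‖S t f‖ ≤ ‖T t‖ * ‖f‖ := by
  have h1 : |S t f| ≤ S t |f| := by
    rw [abs_le']
    refine ⟨PosOp.mono (hS t ht) (le_abs_self f), ?_⟩
    rw [← map_neg]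
    exact PosOp.mono (hS t ht) (neg_le_abs f)
  have h2 : |S t f| ≤ |T t (|f|)| := (h1.trans (h t ht _ (abs_nonneg f))).trans (le_abs_self _)
  refine (norm_le_norm_of_abs_le_abs h2).trans ?_
  refine (ContinuousLinearMap.le_opNorm _ _).trans ?_
  rw [norm_abs_eq_norm]

lemma norm_squeeze {a b c f : E} (h1 : a ≤ b) (h2 : b ≤ c) : ‖b - f‖ ≤ ‖a - f‖ + ‖c - f‖ := by
  have : |b - f| ≤ |(|a - f| + |c - f|)| := by
    refine le_trans ?_ (le_abs_self _)
    rw [abs_le']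
    constructor
    · refine (sub_le_sub_right h2 f).trans ((le_abs_self _).trans ?_)
      exact le_add_of_nonneg_left (abs_nonneg _)
    · refine (neg_le_neg (sub_le_sub_right h1 f)).trans ((neg_le_abs _).trans ?_)
      exact le_add_of_nonneg_right (abs_nonneg _)
  refine (norm_le_norm_of_abs_le_abs this).trans ((norm_add_le _ _).trans ?_)
  rw [norm_abs_eq_norm, norm_abs_eq_norm]

lemma tendsto_squeeze {ι : Type*} {l : Filter ι} {a b c : ι → E} {f : E} (ha : Tendsto a l (𝓝 f))
    (hc : Tendsto c l (𝓝 f)) (h1 : ∀ᶠ i in l, a i ≤ b i) (h2 : ∀ᶠ i in l, b i ≤ c i) :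
    Tendsto b l (𝓝 f) := by
  rw [tendsto_iff_norm_sub_tendsto_zero] at ha hc ⊢
  have := ha.add hc
  rw [add_zero] at this
  refine squeeze_zero' (Eventually.of_forall fun _ => norm_nonneg _) ?_ this
  filter_upwards [h1, h2] with i h1 h2
  exact norm_squeeze h1 h2

/-- strong convergence only needs to be checked on positive elements -/
lemma tendsto_of_pos {ι : Type*} {l : Filter ι} {Q : ι → E →L[ℝ] E} {R : E →L[ℝ] E}
    (h : ∀ f, 0 ≤ f → Tendsto (fun i => Q i f) l (𝓝 (R f))) (f : E) :
    Tendsto (fun i => Q i f) l (𝓝 (R f)) := by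
  have := (h f⁺ (posPart_nonneg f)).sub (h f⁻ (negPart_nonneg f))
  rw [← map_sub, posPart_sub_negPart] at this
  refine this.congr fun i => ?_
  rw [← map_sub, posPart_sub_negPart]

lemma c0_zero {T : ℝ → E →L[ℝ] E} (hT : IsC0Semigroup T) (f : E) :
    Tendsto (fun t => T t f) (𝓝[≥] (0:ℝ)) (𝓝 f) := by
  have := (hT.2 f) 0 (by simp)
  simpa [ContinuousWithinAt, hT.1.1] using this

lemma c0_of_squeeze {R T L : ℝ → E →L[ℝ] E} (hT : IsC0Semigroup T) (hR : IsSemigroup R)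
    (hRp : PosF R) (hRT : LeF R T) (hLR : LeF L R)
    (hL : ∀ f, Tendsto (fun t => L t f) (𝓝[≥] (0:ℝ)) (𝓝 f)) : IsC0Semigroup R := by
  refine ⟨hR, fun f => ?_⟩
  have h0 : Tendsto (fun t => R t f) (𝓝[≥] (0:ℝ)) (𝓝 f) := by
    refine tendsto_of_pos (R := ContinuousLinearMap.id ℝ E) (fun f hf => ?_) f
    refine tendsto_squeeze (hL f) (c0_zero hT f) ?_ ?_
    · filter_upwards [self_mem_nhdsWithin] with t ht using hLR t ht f hf
    · filter_upwards [self_mem_nhdsWithin] with t ht using hRT t ht f hf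
  intro t ht
  obtain ⟨M, hM0, hM⟩ := locBdd hT (t + 1)
  rw [ContinuousWithinAt, tendsto_iff_norm_sub_tendsto_zero]
  have hab : Tendsto (fun s => |s - t|) (𝓝[≥] t ⊔ 𝓝[Set.Ici 0] t) (𝓝[≥] (0:ℝ)) := by
    apply tendsto_nhdsWithin_of_tendsto_nhds_of_eventually_within
    · have : Continuous (fun s => |s - t|) := by fun_prop
      have := this.tendsto t
      rw [sub_self, abs_zero] at this
      exact this.mono_left (sup_le nhdsWithin_le_nhds nhdsWithin_le_nhds)
    · exact Eventually.of_forall fun s => Set.mem_Ici.2 (abs_nonneg _)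
  have h1 := h0.comp (hab.mono_left le_sup_right)
  rw [tendsto_iff_norm_sub_tendsto_zero] at h1
  have h2 := h1.const_mul M
  rw [mul_zero] at h2
  refine squeeze_zero' (Eventually.of_forall fun _ => norm_nonneg _) ?_ h2
  have hev : ∀ᶠ s in 𝓝[Set.Ici 0] t, s < t + 1 :=
    mem_nhdsWithin_of_mem_nhds (Iio_mem_nhds (by linarith))
  filter_upwards [self_mem_nhdsWithin, hev] with s hs hs1
  have hs : 0 ≤ s := hs
  have ht : 0 ≤ t := ht
  simp only [Function.comp]
  have bd : ∀ r, 0 ≤ r → r ≤ t + 1 → ∀ x, ‖R r x‖ ≤ M * ‖x‖ := fun r h0 h1 x =>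
    (norm_le_of_le hRp hRT h0 x).trans (mul_le_mul_of_nonneg_right (hM r h0 h1) (norm_nonneg _))
  rcases le_total t s with hst | hst
  · have e : R s f - R t f = R t (R (s - t) f - f) := by
      have e3 := hR.2 t (s - t) ht (by linarith)
      rw [add_sub_cancel] at e3
      rw [e3, map_sub]; rfl
    rw [abs_of_nonneg (sub_nonneg.2 hst), e]
    exact bd t ht (by linarith) _
  · have e : R s f - R t f = - R s (R (t - s) f - f) := by
      have e3 := hR.2 s (t - s) hs (by linarith)
      rw [add_sub_cancel] at e3
      rw [e3, map_sub, neg_sub]; rfl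
    rw [abs_sub_comm, abs_of_nonneg (sub_nonneg.2 hst), e, norm_neg]
    exact bd s hs (by linarith) _

/-- order continuity of the norm, sequential form -/
def OC (E : Type*) [NormedAddCommGroup E] [Lattice E] : Prop :=
  ∀ u : ℕ → E, Antitone u → (∀ n, 0 ≤ u n) → ∃ l, Tendsto u atTop (𝓝 l)

lemma exists_limit (hOC : OC E) {Q : ℕ → ℝ → E →L[ℝ] E} (hQ : ∀ n, PosF (Q n))
    (hdec : ∀ m n, m ≤ n → LeF (Q n) (Q m)) :
    ∃ R : ℝ → E →L[ℝ] E, ∀ t, 0 ≤ t → ∀ f, Tendsto (fun n => Q n t f) atTop (𝓝 (R t f)) := by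
  have : ∀ t, ∃ R : E →L[ℝ] E, 0 ≤ t → ∀ f, Tendsto (fun n => Q n t f) atTop (𝓝 (R f)) := by
    intro t
    by_cases ht : 0 ≤ t
    swap
    · exact ⟨0, fun h => absurd h ht⟩
    have hpos : ∀ f, 0 ≤ f → ∃ l, Tendsto (fun n => Q n t f) atTop (𝓝 l) := fun f hf =>
      hOC _ (fun m n hmn => hdec m n hmn t ht f hf) (fun n => hQ n t ht f hf)
    have hall : ∀ f, ∃ l, Tendsto (fun n => Q n t f) atTop (𝓝 l) := by
      intro f
      obtain ⟨l1, h1⟩ := hpos f⁺ (posPart_nonneg f)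
      obtain ⟨l2, h2⟩ := hpos f⁻ (negPart_nonneg f)
      refine ⟨l1 - l2, (h1.sub h2).congr fun n => ?_⟩
      rw [← map_sub, posPart_sub_negPart]
    choose R hR using hall
    refine ⟨continuousLinearMapOfTendsto (fun n => Q n t) (f := R) (l := atTop)
      (tendsto_pi_nhds.2 hR), fun _ f => hR f⟩
  choose R hR using this
  exact ⟨R, hR⟩

lemma limit_le {Q : ℕ → ℝ → E →L[ℝ] E} {R T : ℝ → E →L[ℝ] E}
    (hR : ∀ t, 0 ≤ t → ∀ f, Tendsto (fun n => Q n t f) atTop (𝓝 (R t f)))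
    (h : ∀ᶠ n in atTop, LeF (Q n) T) : LeF R T := fun t ht f hf =>
  le_of_tendsto (hR t ht f) (h.mono fun n hn => hn t ht f hf)

lemma le_limit {Q : ℕ → ℝ → E →L[ℝ] E} {R T : ℝ → E →L[ℝ] E}
    (hR : ∀ t, 0 ≤ t → ∀ f, Tendsto (fun n => Q n t f) atTop (𝓝 (R t f)))
    (h : ∀ᶠ n in atTop, LeF T (Q n)) : LeF T R := fun t ht f hf =>
  ge_of_tendsto (hR t ht f) (h.mono fun n hn => hn t ht f hf)

lemma limit_pos {Q : ℕ → ℝ → E →L[ℝ] E} {R : ℝ → E →L[ℝ] E}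
    (hR : ∀ t, 0 ≤ t → ∀ f, Tendsto (fun n => Q n t f) atTop (𝓝 (R t f)))
    (h : ∀ n, PosF (Q n)) : PosF R := fun t ht f hf =>
  ge_of_tendsto' (hR t ht f) (fun n => h n t ht f hf)

lemma limit_sg {Q : ℕ → ℝ → E →L[ℝ] E} {R T : ℝ → E →L[ℝ] E}
    (hR : ∀ t, 0 ≤ t → ∀ f, Tendsto (fun n => Q n t f) atTop (𝓝 (R t f)))
    (hp : ∀ n, PosF (Q n)) (hle : ∀ n, LeF (Q n) T) (hQ : ∀ n, IsSemigroup (Q n)) :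
    IsSemigroup R := by
  refine ⟨?_, ?_⟩
  · ext f
    refine tendsto_nhds_unique (hR 0 le_rfl f) ?_
    simp [(hQ _).1]
  · intro s t hs ht
    ext f
    refine tendsto_nhds_unique (hR (s + t) (add_nonneg hs ht) f) ?_
    have h1 := hR s hs (R t f)
    have h2 : Tendsto (fun n => Q n s (Q n t f - R t f)) atTop (𝓝 0) := by
      have h3 := hR t ht f
      rw [tendsto_iff_norm_sub_tendsto_zero] at h3
      have h4 := h3.const_mul ‖T s‖
      rw [mul_zero] at h4
      exact squeeze_zero_norm (fun n => norm_le_of_le (hp n) (hle n) hs _) h4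
    have h5 := h2.add h1
    rw [zero_add] at h5
    refine h5.congr fun n => ?_
    rw [map_sub, sub_add_cancel, (hQ n).2 s t hs ht]
    rfl

end C0

set_option linter.unusedSectionVars false
namespace C0

variable {Ω : Type*} [MeasurableSpace Ω] {μ : Measure Ω} {p : ℝ≥0∞} [Fact (1 ≤ p)]

instance instOrdModLp : IsOrderedModule ℝ (Lp ℝ p μ) := by
  apply IsOrderedModule.of_smul_nonneg
  intro a ha f hf
  rw [← Lp.coeFn_nonneg] at hf ⊢
  filter_upwards [hf, Lp.coeFn_smul a f] with x h1 h2
  rw [h2]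
  exact mul_nonneg ha h1

lemma norm_sub_pow (hp : p ≠ ∞) {f g : Lp ℝ p μ} (h0 : 0 ≤ g) (h1 : g ≤ f) :
    ‖f - g‖ ^ p.toReal + ‖g‖ ^ p.toReal ≤ ‖f‖ ^ p.toReal := by
  have hp1 : (1 : ℝ≥0∞) ≤ p := Fact.out
  have hp0 : p ≠ 0 := (zero_lt_one.trans_le hp1).ne'
  have hpr : 1 ≤ p.toReal := by
    have := ENNReal.toReal_mono hp hp1
    simpa using this
  have hpr0 : 0 < p.toReal := by linarith
  have key : ∀ h : Lp ℝ p μ, ENNReal.ofReal (‖h‖ ^ p.toReal) = ∫⁻ x, ‖h x‖ₑ ^ p.toReal ∂μ := by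
    intro h
    rw [← ENNReal.ofReal_rpow_of_nonneg (norm_nonneg _) hpr0.le, ofReal_norm, Lp.enorm_def,
      eLpNorm_eq_lintegral_rpow_enorm_toReal hp0 hp, ← ENNReal.rpow_mul, one_div,
      inv_mul_cancel₀ hpr0.ne', ENNReal.rpow_one]
  rw [← ENNReal.ofReal_le_ofReal_iff (by positivity), ENNReal.ofReal_add (by positivity) (by positivity),
    key, key, key, ← lintegral_add_right']
  · apply lintegral_mono_ae
    rw [← Lp.coeFn_nonneg] at h0
    rw [← Lp.coeFn_le] at h1
    filter_upwards [h0, h1, Lp.coeFn_sub f g] with x h0 h1 h2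
    refine (ENNReal.add_rpow_le_rpow_add _ _ hpr).trans ?_
    gcongr
    have h0 : 0 ≤ g x := h0
    rw [h2, Pi.sub_apply, Real.enorm_of_nonneg (sub_nonneg.2 h1), Real.enorm_of_nonneg h0,
      Real.enorm_of_nonneg (h0.trans h1), ← ENNReal.ofReal_add (sub_nonneg.2 h1) h0, sub_add_cancel]
  · exact (Lp.aestronglyMeasurable g).enorm.pow_const _

lemma oc_Lp (hp : p ≠ ∞) : OC (Lp ℝ p μ) := by
  intro u hu h0
  have hp1 : (1 : ℝ≥0∞) ≤ p := Fact.out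
  have hpr : 1 ≤ p.toReal := by
    have := ENNReal.toReal_mono hp hp1
    simpa using this
  have hpr0 : 0 < p.toReal := by linarith
  set a : ℕ → ℝ := fun n => ‖u n‖ ^ p.toReal with ha
  have key : ∀ m n, m ≤ n → ‖u m - u n‖ ^ p.toReal + a n ≤ a m := fun m n h =>
    norm_sub_pow hp (h0 n) (hu h)
  have hanti : Antitone a := fun m n h => by
    have := key m n h
    have h2 : 0 ≤ ‖u m - u n‖ ^ p.toReal := by positivity
    linarith
  have hbdd : BddBelow (Set.range a) := ⟨0, by rintro _ ⟨n, rfl⟩; simp only [ha]; positivity⟩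
  have hlim := tendsto_atTop_ciInf hanti hbdd
  have hc : CauchySeq a := hlim.cauchySeq
  apply cauchySeq_tendsto_of_complete
  rw [Metric.cauchySeq_iff']
  intro ε hε
  obtain ⟨N, hN⟩ := Metric.cauchySeq_iff'.1 hc (ε ^ p.toReal) (by positivity)
  refine ⟨N, fun n hn => ?_⟩
  have h1 := key N n hn
  have h2 := hN n hn
  rw [Real.dist_eq, abs_sub_comm, abs_of_nonneg (sub_nonneg.2 (hanti hn))] at h2
  rw [dist_comm, dist_eq_norm]
  exact (Real.rpow_lt_rpow_iff (norm_nonneg _) hε.le hpr0).1 (by linarith)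

/-- bounded locally measurable functions -/
def Good (μ : Measure Ω) (W : Ω → ℝ) : Prop := LocallyMeasurable μ W ∧ ∃ c, ∀ ω, |W ω| ≤ c

lemma lm_comp {α β : Type*} [MeasurableSpace α] [MeasurableSpace β] {V : Ω → α}
    (hV : LocallyMeasurable μ V) {φ : α → β} (hφ : Measurable φ) :
    LocallyMeasurable μ (fun ω => φ (V ω)) := by
  intro B hB hB'
  obtain ⟨g, hg, h⟩ := hV B hB hB'
  exact ⟨fun ω => φ (g ω), hφ.comp hg, h.mono fun ω h => by simp only [h]⟩

lemma lm_comp₂ {α β γ : Type*} [MeasurableSpace α] [MeasurableSpace β] [MeasurableSpace γ]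
    {V : Ω → α} {W : Ω → β} (hV : LocallyMeasurable μ V) (hW : LocallyMeasurable μ W)
    {φ : α × β → γ} (hφ : Measurable φ) :
    LocallyMeasurable μ (fun ω => φ (V ω, W ω)) := by
  intro B hB hB'
  obtain ⟨g, hg, h⟩ := hV B hB hB'
  obtain ⟨g', hg', h'⟩ := hW B hB hB'
  refine ⟨fun ω => φ (g ω, g' ω), hφ.comp (hg.prodMk hg'), ?_⟩
  filter_upwards [h, h'] with ω h h'
  rw [h, h']

lemma Good.sub {W W' : Ω → ℝ} (h : Good μ W) (h' : Good μ W') : Good μ (fun ω => W ω - W' ω) := by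
  obtain ⟨h1, c, hc⟩ := h
  obtain ⟨h1', c', hc'⟩ := h'
  exact ⟨lm_comp₂ h1 h1' (φ := fun q => q.1 - q.2) (by fun_prop), c + c', fun ω =>
    (abs_sub _ _).trans (add_le_add (hc ω) (hc' ω))⟩

lemma Good.cmul {W : Ω → ℝ} (h : Good μ W) (a : ℝ) : Good μ (fun ω => a * W ω) := by
  obtain ⟨h1, c, hc⟩ := h
  exact ⟨lm_comp h1 (φ := fun q => a * q) (by fun_prop), |a| * c, fun ω => by
    rw [abs_mul]; exact mul_le_mul_of_nonneg_left (hc ω) (abs_nonneg _)⟩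

lemma lm_smul {V : Ω → ℝ≥0∞} (h : LocallyMeasurable μ V) (ε : ℝ) :
    LocallyMeasurable μ (smulRate ε V) :=
  lm_comp h (φ := fun v => ENNReal.ofReal ε * v) (by fun_prop)

lemma lm_resid {V : Ω → ℝ≥0∞} (h : LocallyMeasurable μ V) (n : ℕ) :
    LocallyMeasurable μ (resid V n) :=
  lm_comp h (φ := fun v => v - min v n) (by fun_prop)

lemma trunc_nonneg (V : Ω → ℝ≥0∞) (n : ℕ) (ω : Ω) : 0 ≤ trunc V n ω := ENNReal.toReal_nonneg

lemma trunc_le (V : Ω → ℝ≥0∞) (n : ℕ) (ω : Ω) : trunc V n ω ≤ n := by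
  have := ENNReal.toReal_mono (ENNReal.natCast_ne_top n) (min_le_right (V ω) (n : ℝ≥0∞))
  simpa [trunc] using this

lemma good_trunc {V : Ω → ℝ≥0∞} (h : LocallyMeasurable μ V) (n : ℕ) : Good μ (trunc V n) :=
  ⟨lm_comp h (φ := fun v => (min v (n : ℝ≥0∞)).toReal) (by fun_prop), n, fun ω => by
    rw [abs_of_nonneg (trunc_nonneg V n ω)]; exact trunc_le V n ω⟩

lemma aesm_mul (hp : p ≠ ∞) {W : Ω → ℝ} (hW : LocallyMeasurable μ W) (f : Lp ℝ p μ) :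
    AEStronglyMeasurable (fun ω => W ω * f ω) μ := by
  have hp1 : (1 : ℝ≥0∞) ≤ p := Fact.out
  have hp0 : p ≠ 0 := (zero_lt_one.trans_le hp1).ne'
  obtain ⟨fs, hfs, hlim⟩ := Lp.finStronglyMeasurable f hp0 hp
  refine aestronglyMeasurable_of_tendsto_ae (u := atTop) (f := fun n ω => W ω * fs n ω) ?_
    (Eventually.of_forall fun ω => (hlim ω).const_mul (W ω))
  intro n
  obtain ⟨g, hg, h⟩ := hW (Function.support (fs n)) (fs n).measurableSet_support (hfs n)
  rw [ae_restrict_iff' (fs n).measurableSet_support] at h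
  refine ⟨fun ω => g ω * fs n ω, (hg.mul (fs n).measurable).stronglyMeasurable, ?_⟩
  filter_upwards [h] with ω h
  by_cases h0 : fs n ω = 0
  · simp [h0]
  · rw [h h0]

lemma exists_mulOp (hp : p ≠ ∞) {W : Ω → ℝ} (hW : Good μ W) :
    ∃ M : Lp ℝ p μ →L[ℝ] Lp ℝ p μ, ∀ f, ⇑(M f) =ᵐ[μ] fun ω => W ω * f ω := by
  obtain ⟨h1, c, hc⟩ := hW
  have hm : ∀ f : Lp ℝ p μ, MemLp (fun ω => W ω * f ω) p μ := fun f =>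
    MemLp.of_le_mul (c := c) (Lp.memLp f) (aesm_mul hp h1 f) (Eventually.of_forall fun ω => by
      rw [norm_mul]; exact mul_le_mul_of_nonneg_right (hc ω) (norm_nonneg _))
  let L : Lp ℝ p μ →ₗ[ℝ] Lp ℝ p μ :=
    { toFun := fun f => (hm f).toLp _
      map_add' := fun f g => by
        apply Lp.ext
        filter_upwards [(hm (f + g)).coeFn_toLp, (hm f).coeFn_toLp, (hm g).coeFn_toLp,
          Lp.coeFn_add f g, Lp.coeFn_add ((hm f).toLp _) ((hm g).toLp _)] with ω a1 a2 a3 a4 a5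
        rw [a1, a5, Pi.add_apply, a2, a3, a4, Pi.add_apply, mul_add]
      map_smul' := fun r f => by
        apply Lp.ext
        filter_upwards [(hm (r • f)).coeFn_toLp, (hm f).coeFn_toLp,
          Lp.coeFn_smul r f, Lp.coeFn_smul r ((hm f).toLp _)] with ω a1 a2 a4 a5
        rw [a1, RingHom.id_apply, a5, Pi.smul_apply, a2, a4, Pi.smul_apply, smul_eq_mul, smul_eq_mul]
        ring }
  refine ⟨L.mkContinuous c fun f => ?_, fun f => (hm f).coeFn_toLp⟩
  apply Lp.norm_le_mul_norm_of_ae_le_mul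
  filter_upwards [(hm f).coeFn_toLp] with ω h
  change ‖((hm f).toLp _ : Ω → ℝ) ω‖ ≤ _
  rw [h, norm_mul]; exact mul_le_mul_of_nonneg_right (hc ω) (norm_nonneg _)

open Classical in
/-- multiplication operator -/
def mulOp (μ : Measure Ω) (p : ℝ≥0∞) [Fact (1 ≤ p)] (W : Ω → ℝ) : Lp ℝ p μ →L[ℝ] Lp ℝ p μ :=
  if h : ∃ M : Lp ℝ p μ →L[ℝ] Lp ℝ p μ, ∀ f, ⇑(M f) =ᵐ[μ] fun ω => W ω * f ω then h.choose else 0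

lemma mulOp_spec (hp : p ≠ ∞) {W : Ω → ℝ} (hW : Good μ W) (f : Lp ℝ p μ) :
    ⇑(mulOp μ p W f) =ᵐ[μ] fun ω => W ω * f ω := by
  have h := exists_mulOp (p := p) hp hW
  unfold mulOp
  rw [dif_pos h]
  exact h.choose_spec f

lemma mulOp_sub (hp : p ≠ ∞) {W W' : Ω → ℝ} (h : Good μ W) (h' : Good μ W') :
    mulOp μ p (fun ω => W ω - W' ω) = mulOp μ p W - mulOp μ p W' := by
  ext1 f
  apply Lp.ext
  rw [_root_.sub_apply]
  filter_upwards [mulOp_spec hp (h.sub h') f, mulOp_spec hp h f, mulOp_spec hp h' f,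
    Lp.coeFn_sub (mulOp μ p W f) (mulOp μ p W' f)] with ω a1 a2 a3 a4
  rw [a1, a4, Pi.sub_apply, a2, a3, sub_mul]

lemma mulOp_cmul (hp : p ≠ ∞) {W : Ω → ℝ} (h : Good μ W) (a : ℝ) :
    mulOp μ p (fun ω => a * W ω) = a • mulOp μ p W := by
  ext1 f
  apply Lp.ext
  rw [_root_.smul_apply]
  filter_upwards [mulOp_spec hp (h.cmul a) f, mulOp_spec hp h f,
    Lp.coeFn_smul a (mulOp μ p W f)] with ω a1 a2 a4
  rw [a1, a4, Pi.smul_apply, a2, smul_eq_mul, mul_assoc]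

lemma mulOp_pos (hp : p ≠ ∞) {W : Ω → ℝ} (h : Good μ W) (h0 : ∀ ω, 0 ≤ W ω) :
    PosOp (mulOp μ p W) := by
  intro f hf
  rw [← Lp.coeFn_nonneg] at hf ⊢
  filter_upwards [mulOp_spec hp h f, hf] with ω a1 a2
  rw [a1]
  exact mul_nonneg (h0 ω) a2

lemma mulOp_shift (hp : p ≠ ∞) {W : Ω → ℝ} (h : Good μ W) :
    ∃ c : ℝ, PosOp (-mulOp μ p W + c • ContinuousLinearMap.id ℝ (Lp ℝ p μ)) := by
  obtain ⟨c, hc⟩ := h.2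
  refine ⟨c, fun f hf => ?_⟩
  have e : (-mulOp μ p W + c • ContinuousLinearMap.id ℝ (Lp ℝ p μ)) f = c • f - mulOp μ p W f := by
    simp only [_root_.add_apply, _root_.neg_apply, _root_.smul_apply, ContinuousLinearMap.id_apply]
    abel
  rw [e, sub_nonneg, ← Lp.coeFn_le]
  rw [← Lp.coeFn_nonneg] at hf
  filter_upwards [mulOp_spec hp h f, hf, Lp.coeFn_smul c f] with ω a1 a2 a3
  rw [a1, a3]
  exact mul_le_mul_of_nonneg_right ((le_abs_self _).trans (hc ω)) a2

lemma pert_iff (hp : p ≠ ∞) {W : Ω → ℝ} (h : Good μ W) {T S : ℝ → Lp ℝ p μ →L[ℝ] Lp ℝ p μ} :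
    IsPerturbedSG μ p T S W ↔ Pert T S (-mulOp μ p W) := by
  unfold IsPerturbedSG Pert
  refine and_congr_right fun _ => forall_congr' fun f => forall_congr' fun g => ?_
  refine iff_congr Iff.rfl ?_
  rw [_root_.neg_apply, sub_neg_eq_add]
  constructor
  · rintro ⟨g0, h1, h2⟩
    convert h1
    apply Lp.ext
    filter_upwards [h2, mulOp_spec hp h f, Lp.coeFn_add g (mulOp μ p W f)] with ω a1 a2 a3
    rw [a3, Pi.add_apply, a2, a1]; ring
  · intro h1
    refine ⟨_, h1, ?_⟩
    filter_upwards [mulOp_spec hp h f, Lp.coeFn_add g (mulOp μ p W f)] with ω a2 a3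
    rw [a3, Pi.add_apply, a2]; ring

end C0

set_option linter.unusedSectionVars false
namespace C0

variable {Ω : Type*} [MeasurableSpace Ω] {μ : Measure Ω} {p : ℝ≥0∞} [Fact (1 ≤ p)]

/-! pointwise facts -/
lemma trunc_top {V : Ω → ℝ≥0∞} {ω : Ω} (h : V ω = ⊤) (n : ℕ) : trunc V n ω = n := by
  simp [trunc, h]

lemma trunc_real {V : Ω → ℝ≥0∞} {ω : Ω} {x : ℝ} (h : V ω = ENNReal.ofReal x) (hx : 0 ≤ x) (n : ℕ) :
    trunc V n ω = min x n := by
  have : (n : ℝ≥0∞) = ENNReal.ofReal (n : ℝ) := by simp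
  rw [trunc, h, this, ← ENNReal.ofReal_min, ENNReal.toReal_ofReal (le_min hx (Nat.cast_nonneg n))]

lemma smul_top' {V : Ω → ℝ≥0∞} {ω : Ω} (h : V ω = ⊤) {ε : ℝ} (hε : 0 < ε) : smulRate ε V ω = ⊤ := by
  rw [smulRate, h, ENNReal.mul_top]
  simpa using hε

lemma smul_real {V : Ω → ℝ≥0∞} {ω : Ω} {x : ℝ} (h : V ω = ENNReal.ofReal x) {ε : ℝ} (hε : 0 < ε) :
    smulRate ε V ω = ENNReal.ofReal (ε * x) := by
  rw [smulRate, h, ENNReal.ofReal_mul hε.le]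

lemma resid_top {V : Ω → ℝ≥0∞} {ω : Ω} (h : V ω = ⊤) (n : ℕ) : resid V n ω = ⊤ := by
  simp [resid, h]

lemma resid_real {V : Ω → ℝ≥0∞} {ω : Ω} {x : ℝ} (h : V ω = ENNReal.ofReal x) (hx : 0 ≤ x) (n : ℕ) :
    resid V n ω = ENNReal.ofReal (x - min x n) := by
  have : (n : ℝ≥0∞) = ENNReal.ofReal (n : ℝ) := by simp
  rw [resid, h, this, ← ENNReal.ofReal_min, ENNReal.ofReal_sub _ (le_min hx (Nat.cast_nonneg n))]

lemma cases_v (v : ℝ≥0∞) : v = ⊤ ∨ ∃ x : ℝ, 0 ≤ x ∧ v = ENNReal.ofReal x := by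
  by_cases h : v = ⊤
  · exact Or.inl h
  · exact Or.inr ⟨v.toReal, ENNReal.toReal_nonneg, (ENNReal.ofReal_toReal h).symm⟩

lemma trunc_mono {V V' : Ω → ℝ≥0∞} (h : ∀ ω, V ω ≤ V' ω) {m n : ℕ} (hmn : m ≤ n) (ω : Ω) :
    trunc V m ω ≤ trunc V' n ω := by
  apply ENNReal.toReal_mono
  · exact ne_top_of_le_ne_top (ENNReal.natCast_ne_top n) (min_le_right _ _)
  · exact min_le_min (h ω) (by exact_mod_cast hmn)

lemma trunc_double (V : Ω → ℝ≥0∞) (n : ℕ) :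
    trunc (smulRate 2 V) (2 * n) = fun ω => 2 * trunc V n ω := by
  funext ω
  rcases cases_v (V ω) with h | ⟨x, hx, h⟩
  · rw [trunc_top (smul_top' h two_pos), trunc_top h]; push_cast; rfl
  · rw [trunc_real (smul_real h two_pos) (by positivity), trunc_real h hx,
      mul_min_of_nonneg _ _ zero_le_two]
    push_cast; rfl

lemma smul_smul' (V : Ω → ℝ≥0∞) {a : ℝ} (b : ℝ) (ha : 0 ≤ a) :
    smulRate a (smulRate b V) = smulRate (a * b) V := by
  funext ω
  simp only [smulRate]
  rw [ENNReal.ofReal_mul ha, mul_assoc]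

lemma smul_one' (V : Ω → ℝ≥0∞) : smulRate 1 V = V := by
  funext ω
  simp [smulRate]

lemma pw1 (V : Ω → ℝ≥0∞) {ε : ℝ} (hε : 0 < ε) (k n : ℕ) (ω : Ω) :
    trunc (smulRate ε V) k ω ≤ trunc (smulRate (1 + ε) V) (k + n) ω - trunc V n ω := by
  have h1 : 0 < 1 + ε := by linarith
  rcases cases_v (V ω) with h | ⟨x, hx, h⟩
  · rw [trunc_top (smul_top' h hε), trunc_top (smul_top' h h1), trunc_top h]; push_cast; linarith
  · rw [trunc_real (smul_real h hε) (by positivity), trunc_real (smul_real h h1) (by positivity),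
      trunc_real h hx, le_sub_iff_add_le]
    push_cast
    refine le_min ?_ ?_
    · have := min_le_left (ε * x) (k : ℝ)
      have := min_le_left x (n : ℝ)
      linarith
    · exact add_le_add (min_le_right _ _) (min_le_right _ _)

lemma pw2 (V : Ω → ℝ≥0∞) {ε : ℝ} (hε : 0 < ε) (k n j m : ℕ) (hj : (j : ℝ) ≤ ε * n)
    (hm : ε * (n + k) ≤ m) (ω : Ω) :
    trunc (smulRate ε V) j ω ≤ trunc (smulRate ε V) m ω - ε * trunc (resid V n) k ω := by
  have hk : (0 : ℝ) ≤ k := Nat.cast_nonneg k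
  rcases cases_v (V ω) with h | ⟨x, hx, h⟩
  · rw [trunc_top (smul_top' h hε), trunc_top (smul_top' h hε), trunc_top (resid_top h n)]; linarith
  · rw [trunc_real (smul_real h hε) (by positivity), trunc_real (smul_real h hε) (by positivity),
      trunc_real (resid_real h hx n) (sub_nonneg.2 (min_le_left _ _)), le_sub_iff_add_le]
    have a1 := min_le_left (ε * x) (j : ℝ)
    have a2 := min_le_right (ε * x) (j : ℝ)
    have a3 := min_le_left (x - min x n) (k : ℝ)
    have a4 := min_le_right (x - min x n) (k : ℝ)
    have b3 := mul_le_mul_of_nonneg_left a3 hε.le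
    have b4 := mul_le_mul_of_nonneg_left a4 hε.le
    refine le_min ?_ ?_
    · rcases le_total x n with hxn | hxn
      · rw [min_eq_left hxn] at *; linarith
      · rw [min_eq_right hxn] at *; linarith
    · linarith

/-! perturbation by multiplication operators -/

/-- `S` is generated by `A - W` -/
def PW (T S : ℝ → Lp ℝ p μ →L[ℝ] Lp ℝ p μ) (W : Ω → ℝ) : Prop :=
  Good μ W ∧ Pert T S (-mulOp μ p W)

lemma PW.diff (hp : p ≠ ∞) {T S1 S2 : ℝ → Lp ℝ p μ →L[ℝ] Lp ℝ p μ} {W1 W2 : Ω → ℝ}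
    (hT : IsC0Semigroup T) (h1 : PW T S1 W1) (h2 : PW T S2 W2) :
    PW S1 S2 (fun ω => W2 ω - W1 ω) := by
  refine ⟨h2.1.sub h1.1, ?_⟩
  have := (h1.2.symm hT).trans h2.2
  rw [mulOp_sub hp h2.1 h1.1]
  convert this using 1
  abel

/-- adding back part of the absorption -/
lemma PW.back (hp : p ≠ ∞) {T S1 S2 : ℝ → Lp ℝ p μ →L[ℝ] Lp ℝ p μ} {W1 W2 : Ω → ℝ}
    (h1 : PW T S1 W1) (hW : Good μ W2) (h2 : Pert S1 S2 (mulOp μ p W2)) :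
    PW T S2 (fun ω => W1 ω - W2 ω) := by
  refine ⟨h1.1.sub hW, ?_⟩
  have := h1.2.trans h2
  rw [mulOp_sub hp h1.1 hW]
  convert this using 1
  abel

lemma PW.exists {T : ℝ → Lp ℝ p μ →L[ℝ] Lp ℝ p μ} {W : Ω → ℝ}
    (hT : IsC0Semigroup T) (hW : Good μ W) : ∃ S, PW T S W := by
  obtain ⟨S, h, _⟩ := exists_pert hT (-mulOp μ p W)
  exact ⟨S, hW, h⟩

lemma PW.pos (hp : p ≠ ∞) {T S : ℝ → Lp ℝ p μ →L[ℝ] Lp ℝ p μ} {W : Ω → ℝ}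
    (hT : IsC0Semigroup T) (hTp : PosF T) (h : PW T S W) : PosF S := by
  obtain ⟨c, hc⟩ := mulOp_shift (p := p) hp h.1
  exact h.2.pos hT hTp hc

lemma PW.le (hp : p ≠ ∞) {T S : ℝ → Lp ℝ p μ →L[ℝ] Lp ℝ p μ} {W : Ω → ℝ}
    (hT : IsC0Semigroup T) (hTp : PosF T) (h0 : ∀ ω, 0 ≤ W ω) (h : PW T S W) : LeF S T := by
  obtain ⟨c, hc⟩ := mulOp_shift (p := p) hp h.1
  exact h.2.le_of_neg hT hTp (mulOp_pos hp h.1 h0) hc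

lemma PW.anti (hp : p ≠ ∞) {T S1 S2 : ℝ → Lp ℝ p μ →L[ℝ] Lp ℝ p μ} {W1 W2 : Ω → ℝ}
    (hT : IsC0Semigroup T) (hTp : PosF T) (h1 : PW T S1 W1) (h2 : PW T S2 W2)
    (h : ∀ ω, W1 ω ≤ W2 ω) : LeF S2 S1 :=
  PW.le hp h1.2.1 (h1.pos hp hT hTp) (fun ω => sub_nonneg.2 (h ω)) (PW.diff hp hT h1 h2)

/-! absorption semigroups -/

/-- absorption semigroup together with its approximants -/
def AB (T : ℝ → Lp ℝ p μ →L[ℝ] Lp ℝ p μ) (V : Ω → ℝ≥0∞)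
    (Q : ℕ → ℝ → Lp ℝ p μ →L[ℝ] Lp ℝ p μ) (R : ℝ → Lp ℝ p μ →L[ℝ] Lp ℝ p μ) : Prop :=
  (∀ n, PW T (Q n) (trunc V n)) ∧
    ∀ t : ℝ, 0 ≤ t → ∀ f, Tendsto (fun n => Q n t f) atTop (𝓝 (R t f))

lemma ab_iff (hp : p ≠ ∞) {T R : ℝ → Lp ℝ p μ →L[ℝ] Lp ℝ p μ} {V : Ω → ℝ≥0∞}
    (hV : LocallyMeasurable μ V) : IsAbsorptionSG μ p T V R ↔ ∃ Q, AB T V Q R := by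
  unfold IsAbsorptionSG AB
  refine exists_congr fun Q => and_congr_left fun _ => forall_congr' fun n => ?_
  rw [pert_iff hp (good_trunc hV n)]
  exact ⟨fun h => ⟨good_trunc hV n, h⟩, fun h => h.2⟩

section
variable {T R : ℝ → Lp ℝ p μ →L[ℝ] Lp ℝ p μ} {V : Ω → ℝ≥0∞}
  {Q : ℕ → ℝ → Lp ℝ p μ →L[ℝ] Lp ℝ p μ}

lemma AB.ex (hp : p ≠ ∞) (hT : IsC0Semigroup T) (hTp : PosF T) (hV : LocallyMeasurable μ V) :
    ∃ Q R, AB T V Q R := by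
  choose Q hQ using fun n => PW.exists (p := p) hT (good_trunc hV n)
  obtain ⟨R, hR⟩ := exists_limit (oc_Lp hp) (Q := Q) (fun n => (hQ n).pos hp hT hTp)
    (fun m n hmn => PW.anti hp hT hTp (hQ m) (hQ n) (trunc_mono (fun _ => le_rfl) hmn))
  exact ⟨Q, R, hQ, hR⟩

lemma AB.qpos (hp : p ≠ ∞) (hT : IsC0Semigroup T) (hTp : PosF T) (h : AB T V Q R) (n : ℕ) :
    PosF (Q n) := (h.1 n).pos hp hT hTp

lemma AB.qle (hp : p ≠ ∞) (hT : IsC0Semigroup T) (hTp : PosF T) (h : AB T V Q R) (n : ℕ) :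
    LeF (Q n) T := (h.1 n).le hp hT hTp (trunc_nonneg V n)

lemma AB.pos (hp : p ≠ ∞) (hT : IsC0Semigroup T) (hTp : PosF T) (h : AB T V Q R) : PosF R :=
  limit_pos h.2 (h.qpos hp hT hTp)

lemma AB.le (hp : p ≠ ∞) (hT : IsC0Semigroup T) (hTp : PosF T) (h : AB T V Q R) : LeF R T :=
  limit_le h.2 (Eventually.of_forall (h.qle hp hT hTp))

lemma AB.sg (hp : p ≠ ∞) (hT : IsC0Semigroup T) (hTp : PosF T) (h : AB T V Q R) : IsSemigroup R :=
  limit_sg h.2 (h.qpos hp hT hTp) (h.qle hp hT hTp) (fun n => (h.1 n).2.1.1)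

lemma AB.le_q (hp : p ≠ ∞) (hT : IsC0Semigroup T) (hTp : PosF T) (h : AB T V Q R) (m : ℕ) :
    LeF R (Q m) :=
  limit_le h.2 ((eventually_ge_atTop m).mono fun n hn =>
    PW.anti hp hT hTp (h.1 m) (h.1 n) (trunc_mono (fun _ => le_rfl) hn))

lemma AB.anti (hp : p ≠ ∞) (hT : IsC0Semigroup T) (hTp : PosF T) (h : AB T V Q R)
    {V' : Ω → ℝ≥0∞} {Q' : ℕ → ℝ → Lp ℝ p μ →L[ℝ] Lp ℝ p μ} {R' : ℝ → Lp ℝ p μ →L[ℝ] Lp ℝ p μ}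
    (h' : AB T V' Q' R') (hV : ∀ ω, V ω ≤ V' ω) : LeF R' R :=
  le_limit h.2 (Eventually.of_forall fun n => (h'.le_q hp hT hTp n).trans
    (PW.anti hp hT hTp (h.1 n) (h'.1 n) (trunc_mono hV le_rfl)))

lemma AB.c0_anti (hp : p ≠ ∞) (hT : IsC0Semigroup T) (hTp : PosF T) (h : AB T V Q R)
    {V' : Ω → ℝ≥0∞} {Q' : ℕ → ℝ → Lp ℝ p μ →L[ℝ] Lp ℝ p μ} {R' : ℝ → Lp ℝ p μ →L[ℝ] Lp ℝ p μ}
    (h' : AB T V' Q' R') (hV : ∀ ω, V ω ≤ V' ω) (hc : IsC0Semigroup R') : IsC0Semigroup R :=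
  c0_of_squeeze hT (h.sg hp hT hTp) (h.pos hp hT hTp) (h.le hp hT hTp) (h.anti hp hT hTp h' hV)
    (c0_zero hc)

lemma AB.c0_double (hp : p ≠ ∞) (hT : IsC0Semigroup T) (hTp : PosF T) (h : AB T V Q R)
    {Q' : ℕ → ℝ → Lp ℝ p μ →L[ℝ] Lp ℝ p μ} {R' : ℝ → Lp ℝ p μ →L[ℝ] Lp ℝ p μ}
    (h' : AB T (smulRate 2 V) Q' R') (hc : IsC0Semigroup R) : IsC0Semigroup R' := by
  refine c0_of_squeeze (L := fun t => (2 : ℝ) • R t - T t) hT (h'.sg hp hT hTp)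
    (h'.pos hp hT hTp) (h'.le hp hT hTp) ?_ ?_
  · intro t ht f hf
    rw [_root_.sub_apply, _root_.smul_apply, sub_le_iff_le_add]
    have l1 := (h.2 t ht f).const_smul (2 : ℝ)
    have tt : Tendsto (fun n : ℕ => 2 * n) atTop atTop :=
      tendsto_atTop_mono (fun n => (by omega : n ≤ 2 * n)) tendsto_id
    have l2 := ((h'.2 t ht f).comp tt).add_const (T t f)
    refine le_of_tendsto_of_tendsto' l1 l2 fun n => ?_
    have g := (h.1 n).1
    obtain ⟨c, hc⟩ := mulOp_shift (p := p) hp g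
    have hq := h'.1 (2 * n)
    rw [trunc_double] at hq
    have hd := PW.diff hp hT (h.1 n) hq
    have e : (fun ω => 2 * trunc V n ω - trunc V n ω) = trunc V n := by funext ω; ring
    rw [e] at hd
    have hb : Pert (Q n) T ((1 : ℝ) • mulOp μ p (trunc V n)) := by
      have := (h.1 n).2.symm hT
      rwa [neg_neg, ← one_smul ℝ (mulOp μ p (trunc V n))] at this
    have := convex (h.1 n).2.1 (h.qpos hp hT hTp n) (mulOp_pos hp g (trunc_nonneg V n)) hc
      zero_le_one hd.2 hb ht hf
    rw [one_smul] at this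
    norm_num at this
    exact this
  · intro f
    have := ((c0_zero hc f).const_smul (2 : ℝ)).sub (c0_zero hT f)
    have e : (2 : ℝ) • f - f = f := by module
    rwa [e] at this

lemma AB.c0_pow (hp : p ≠ ∞) (hT : IsC0Semigroup T) (hTp : PosF T) (hV : LocallyMeasurable μ V)
    (h : AB T V Q R) (hc : IsC0Semigroup R) (k : ℕ) :
    ∀ {Q' : ℕ → ℝ → Lp ℝ p μ →L[ℝ] Lp ℝ p μ} {R' : ℝ → Lp ℝ p μ →L[ℝ] Lp ℝ p μ},
    AB T (smulRate (2 ^ k) V) Q' R' → IsC0Semigroup R' := by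
  induction k with
  | zero =>
    intro Q' R' h'
    rw [pow_zero, smul_one'] at h'
    exact h'.c0_anti hp hT hTp h (fun _ => le_rfl) hc
  | succ k ih =>
    intro Q' R' h'
    obtain ⟨Q1, R1, h1⟩ := AB.ex (p := p) hp hT hTp (lm_smul hV (2 ^ k))
    rw [pow_succ', ← smul_smul' V _ zero_le_two] at h'
    exact h1.c0_double hp hT hTp h' (ih h1)

lemma AB.c0_all (hp : p ≠ ∞) (hT : IsC0Semigroup T) (hTp : PosF T) (hV : LocallyMeasurable μ V)
    (h : AB T V Q R) (hc : IsC0Semigroup R) {c : ℝ}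
    {Q' : ℕ → ℝ → Lp ℝ p μ →L[ℝ] Lp ℝ p μ} {R' : ℝ → Lp ℝ p μ →L[ℝ] Lp ℝ p μ}
    (h' : AB T (smulRate c V) Q' R') : IsC0Semigroup R' := by
  obtain ⟨k, hk⟩ := pow_unbounded_of_one_lt c one_lt_two
  obtain ⟨Q1, R1, h1⟩ := AB.ex (p := p) hp hT hTp (lm_smul hV (2 ^ k))
  refine h'.c0_anti hp hT hTp h1 (fun ω => ?_) (h.c0_pow hp hT hTp hV hc k h1)
  exact mul_le_mul_left (ENNReal.ofReal_le_ofReal hk.le) _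

theorem core (hp : p ≠ ∞) (hT : IsC0Semigroup T) (hTp : PosF T) (hV : LocallyMeasurable μ V)
    (h : AB T V Q R) (hc : IsC0Semigroup R) {ε : ℝ} (hε : 0 < ε)
    {Sn : ℕ → ℝ → Lp ℝ p μ →L[ℝ] Lp ℝ p μ} {S : ℝ → Lp ℝ p μ →L[ℝ] Lp ℝ p μ}
    (hS : AB T (smulRate ε V) Sn S) : StronglyRegular μ p S V := by
  have cS : IsC0Semigroup S := h.c0_all hp hT hTp hV hc hS
  have pS : PosF S := hS.pos hp hT hTp
  refine ⟨⟨hV, ?_⟩, ?_⟩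
  · obtain ⟨Un, U, hU⟩ := AB.ex (p := p) hp hT hTp (lm_smul hV (1 + ε))
    have cU : IsC0Semigroup U := h.c0_all hp hT hTp hV hc hU
    have pU : PosF U := hU.pos hp hT hTp
    obtain ⟨Q1, R1, h1⟩ := AB.ex (p := p) hp cS pS hV
    refine ⟨R1, (ab_iff hp hV).2 ⟨Q1, h1⟩, ?_⟩
    refine c0_of_squeeze cS (h1.sg hp cS pS) (h1.pos hp cS pS) (h1.le hp cS pS) ?_ (c0_zero cU)
    refine le_limit h1.2 (Eventually.of_forall fun n => ?_)
    have g := good_trunc hV n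
    have gp := mulOp_pos (p := p) hp g (trunc_nonneg V n)
    obtain ⟨c, hc⟩ := mulOp_shift (p := p) hp g
    obtain ⟨P, hP, _⟩ := exists_pert cU (mulOp μ p (trunc V n))
    have hPS : LeF P S := by
      refine le_limit hS.2 (Eventually.of_forall fun k => ?_)
      have hk := hU.1 (k + n)
      obtain ⟨Y, hY, _⟩ := exists_pert hk.2.1 (mulOp μ p (trunc V n))
      refine (Pert.mono_pos cU hk.2.1 pU (hU.le_q hp hT hTp _) gp hP hY).trans ?_
      exact PW.anti hp hT hTp (hS.1 k) (hk.back hp g hY) (pw1 V hε k n)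
    exact Pert.mono hP.1 cS (pU.of_le (hP.le_of_pos cU pU gp)) hPS hc (hP.symm cU) (h1.1 n).2
  · intro R' hR' t ht f
    refine tendsto_of_pos (Q := fun n => R' n t) (fun f hf => ?_) f
    have main : ∀ n : ℕ, (1 + ε) • S t f ≤ ε • R' n t f + Sn ⌊ε * n⌋₊ t f ∧ R' n t f ≤ S t f := by
      intro n
      obtain ⟨Q', hQ'⟩ := (ab_iff hp (lm_resid hV n)).1 (hR' n)
      refine ⟨?_, hQ'.le hp cS pS t ht f hf⟩
      refine ge_of_tendsto' (((hQ'.2 t ht f).const_smul ε).add_const _) fun k => ?_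
      have g := good_trunc (lm_resid hV n) k
      have gp := mulOp_pos (p := p) hp g (trunc_nonneg _ k)
      obtain ⟨c, hc⟩ := mulOp_shift (p := p) hp g
      have g' := g.cmul ε
      have gp' : PosOp (ε • mulOp μ p (trunc (resid V n) k)) := fun f hf =>
        smul_nonneg hε.le (gp f hf)
      obtain ⟨S2, hS2, _⟩ := exists_pert cS (ε • mulOp μ p (trunc (resid V n) k))
      refine (convex cS pS gp hc hε.le (hQ'.1 k).2 hS2 ht hf).trans ?_
      gcongr
      have hm := hS.1 ⌈ε * (n + k)⌉₊
      obtain ⟨Y, hY, _⟩ := exists_pert hm.2.1 (ε • mulOp μ p (trunc (resid V n) k))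
      refine (Pert.mono_pos cS hm.2.1 pS (hS.le_q hp hT hTp _) gp' hS2 hY t ht f hf).trans ?_
      rw [← mulOp_cmul hp g] at hY
      refine PW.anti hp hT hTp (hS.1 _) (hm.back hp g' hY) (pw2 V hε k n _ _ ?_ ?_) t ht f hf
      · exact Nat.floor_le (by positivity)
      · exact Nat.le_ceil _
    have tt : Tendsto (fun n : ℕ => ⌊ε * n⌋₊) atTop atTop :=
      tendsto_nat_floor_atTop.comp (tendsto_natCast_atTop_atTop.const_mul_atTop hε)
    have l1 := (((hS.2 t ht f).comp tt).const_sub ((1 + ε) • S t f)).const_smul ε⁻¹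
    have e : ε⁻¹ • ((1 + ε) • S t f - S t f) = S t f := by
      rw [add_smul, one_smul, add_sub_cancel_left, smul_smul, inv_mul_cancel₀ hε.ne', one_smul]
    rw [e] at l1
    refine tendsto_squeeze l1 tendsto_const_nhds ?_ (Eventually.of_forall fun n => (main n).2)
    refine Eventually.of_forall fun n => ?_
    have := smul_le_smul_of_nonneg_left (sub_le_iff_le_add.2 (main n).1) (inv_pos.2 hε).le
    rwa [smul_smul, inv_mul_cancel₀ hε.ne', one_smul] at this

end

end C0

/-- If `V : Ω → [0,∞]` is `T`-admissible, then for every `ε > 0` the rate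
`V` is strongly `T_{εV}`-regular; in particular every positive multiple of `V` is strongly
`T_V`-regular. -/
theorem statement7
    {Ω : Type*} [MeasurableSpace Ω] (μ : Measure Ω) (p : ℝ≥0∞) [Fact (1 ≤ p)] (hp : p ≠ ∞)
    (T : ℝ → Lp ℝ p μ →L[ℝ] Lp ℝ p μ)
    (hT : IsC0Semigroup T) (hTpos : IsPositiveSG T)
    (V : Ω → ℝ≥0∞) (hVmeas : LocallyMeasurable μ V)
    -- the absorption semigroup `T_V`, a `C₀`-semigroup (`V` is `T`-admissible)
    (TV : ℝ → Lp ℝ p μ →L[ℝ] Lp ℝ p μ)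
    (hTV : IsAbsorptionSG μ p T V TV) (hTVC0 : IsC0Semigroup TV) :
    -- `V` is strongly `T_{εV}`-regular for every `ε > 0` …
    (∀ ε : ℝ, 0 < ε → ∀ Sε : ℝ → Lp ℝ p μ →L[ℝ] Lp ℝ p μ,
      IsAbsorptionSG μ p T (smulRate ε V) Sε → StronglyRegular μ p Sε V) ∧
    -- … in particular every positive multiple of `V` is strongly `T_V`-regular
    (∀ c : ℝ, 0 < c → StronglyRegular μ p TV (smulRate c V)) := by
  have hTp : C0.PosF T := hTpos
  obtain ⟨Q, hQ⟩ := (C0.ab_iff hp hVmeas).1 hTV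
  refine ⟨fun ε hε S hS => ?_, fun c hc => ?_⟩
  · obtain ⟨Sn, hSn⟩ := (C0.ab_iff hp (C0.lm_smul hVmeas ε)).1 hS
    exact C0.core hp hT hTp hVmeas hQ hTVC0 hε hSn
  · have hcV := C0.lm_smul hVmeas c
    obtain ⟨Q1, R1, h1⟩ := C0.AB.ex (p := p) hp hT hTp hcV
    have hcc := inv_pos.2 hc
    refine C0.core hp hT hTp hcV h1 (hQ.c0_all hp hT hTp hVmeas hTVC0 h1) hcc (Sn := Q) ?_
    rw [C0.smul_smul' V _ hcc.le, inv_mul_cancel₀ hc.ne', C0.smul_one']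
    exact hQ
end
end

section
/- Let (Ω, 𝒜, μ) be a measure space, p ∈ [1,∞), and T a positive C₀-semigroup on L_p(μ) with generator A, and let V : Ω → [0,∞] be T-admissible. Then for every ε > 0, every n ∈ ℕ, and every t ≥ 0 one has (T_{εV})_{V − V∧n}(t) ≤ T_{V − V∧n}(t); letting n → ∞ yields T_{εV}(t) ≤ (T_V)_{−V}(t) for all ε > 0 and t ≥ 0, and letting ε → 0+ yields T_{0,V} ≤ (T_V)_{−V} in the sense that T_{0,V}(t)f ≤ (T_V)_{−V}(t)f for all t ≥ 0 and all f ≥ 0 in L_p(μ). -/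
open MeasureTheory Filter Topology ENNReal

noncomputable section

open Absorption
set_option linter.unusedSectionVars false
namespace Absorption

section banach
variable {E : Type*} [NormedAddCommGroup E] [NormedSpace ℝ E]

/-- Semigroup, extended to all real times, jointly continuous. -/
def CSG (T : ℝ → E →L[ℝ] E) : Prop :=
  IsSemigroup T ∧ Continuous (fun q : ℝ × E => T q.1 q.2)

/-- generator of `S` is contained in generator of `T` minus `B`. -/
def Pert (T S : ℝ → E →L[ℝ] E) (B : E →L[ℝ] E) : Prop :=
  ∀ f g, InGenerator S f g → InGenerator T f (g + B f)

/-- Extension to negative times. -/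
def clamp (T : ℝ → E →L[ℝ] E) : ℝ → E →L[ℝ] E := fun t => T (max t 0)

lemma clamp_of_nonneg (T : ℝ → E →L[ℝ] E) {t : ℝ} (ht : 0 ≤ t) : clamp T t = T t := by
  simp [clamp, ht]

lemma inGenerator_clamp (T : ℝ → E →L[ℝ] E) (f g : E) :
    InGenerator (clamp T) f g ↔ InGenerator T f g := by
  unfold InGenerator
  apply tendsto_congr'
  filter_upwards [self_mem_nhdsWithin] with t ht
  rw [clamp_of_nonneg T (le_of_lt ht)]

lemma locbdd [CompleteSpace E] {T : ℝ → E →L[ℝ] E} (hT : IsC0Semigroup T) (t : ℝ) :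
    ∃ C, 0 ≤ C ∧ ∀ s, 0 ≤ s → s ≤ t → ‖T s‖ ≤ C := by
  obtain ⟨C, hC⟩ := banach_steinhaus (g := fun s : Set.Icc (0:ℝ) t => T s) (by
    intro x
    obtain ⟨C, hC⟩ := (isCompact_Icc (a := (0:ℝ)) (b := t)).exists_bound_of_continuousOn
      ((hT.2 x).mono (fun s hs => hs.1))
    exact ⟨C, fun i => hC i i.2⟩)
  exact ⟨max C 0, le_max_right _ _, fun s h0 h1 => (hC ⟨s, h0, h1⟩).trans (le_max_left _ _)⟩

lemma csg_clamp [CompleteSpace E] {T : ℝ → E →L[ℝ] E} (hT : IsC0Semigroup T) :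
    CSG (clamp T) := by
  refine ⟨⟨?_, ?_⟩, ?_⟩
  · rw [clamp_of_nonneg T le_rfl]; exact hT.1.1
  · intro s t hs ht
    rw [clamp_of_nonneg T hs, clamp_of_nonneg T ht, clamp_of_nonneg T (add_nonneg hs ht)]
    exact hT.1.2 s t hs ht
  · rw [continuous_iff_continuousAt]
    rintro ⟨t, x⟩
    obtain ⟨C, hC0, hC⟩ := locbdd hT (max (t+1) 0)
    have h1 : Continuous (fun s => clamp T s x) := by
      have := hT.2 x
      exact this.comp_continuous (f := fun s : ℝ => max s 0) (by fun_prop)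
        (fun s => Set.mem_Ici.2 (le_max_right _ _))
    have h2 : Tendsto (fun q : ℝ × E => C * ‖q.2 - x‖) (𝓝 (t, x)) (𝓝 0) := by
      have : Continuous (fun q : ℝ × E => C * ‖q.2 - x‖) := by fun_prop
      simpa using this.tendsto (t, x)
    have h3 : Tendsto (fun q : ℝ × E => clamp T q.1 (q.2 - x)) (𝓝 (t, x)) (𝓝 0) := by
      apply squeeze_zero_norm' _ h2
      have : ∀ᶠ q : ℝ × E in 𝓝 (t, x), q.1 < t + 1 :=
        (continuous_fst.tendsto (t, x)).eventually (gt_mem_nhds (by simp))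
      filter_upwards [this] with q hq
      refine (ContinuousLinearMap.le_opNorm _ _).trans ?_
      gcongr
      exact hC _ (le_max_right _ _) (max_le_max hq.le le_rfl)
    have h4 : Tendsto (fun q : ℝ × E => clamp T q.1 x) (𝓝 (t, x)) (𝓝 (clamp T t x)) :=
      (h1.comp continuous_fst).tendsto (t, x)
    have := h3.add h4
    simpa [ContinuousAt] using this

lemma CSG.cont {T : ℝ → E →L[ℝ] E} (hT : CSG T) {X : Type*} [TopologicalSpace X] {a : X → ℝ}
    {b : X → E} (ha : Continuous a) (hb : Continuous b) : Continuous (fun x => T (a x) (b x)) :=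
  hT.2.comp (ha.prodMk hb)

lemma CSG.isC0 {T : ℝ → E →L[ℝ] E} (hT : CSG T) : IsC0Semigroup T :=
  ⟨hT.1, fun f => (hT.cont continuous_id continuous_const).continuousOn⟩

lemma CSG.add_apply {T : ℝ → E →L[ℝ] E} (hT : CSG T) {s t : ℝ} (hs : 0 ≤ s) (ht : 0 ≤ t) (x : E) :
    T (s + t) x = T s (T t x) := by
  rw [hT.1.2 s t hs ht]; rfl

lemma CSG.zero_apply {T : ℝ → E →L[ℝ] E} (hT : CSG T) (x : E) : T 0 x = x := by
  rw [hT.1.1]; rfl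

/-- Density of the generator domain. -/
lemma CSG.dense [CompleteSpace E] {T : ℝ → E →L[ℝ] E} (hT : CSG T) :
    Dense {f : E | ∃ g, InGenerator T f g} := by
  have hc : ∀ f, Continuous (fun s => T s f) := fun f => hT.cont continuous_id continuous_const
  have key : ∀ f h, 0 < h → InGenerator T (∫ s in (0:ℝ)..h, T s f) (T h f - f) := by
    intro f h hh
    have hd : ∀ x, HasDerivAt (fun u => ∫ s in (0:ℝ)..u, T s f) (T x f) x := fun x =>
      (hc f).integral_hasStrictDerivAt 0 x |>.hasDerivAt
    have hd1 : HasDerivAt (fun u => (∫ s in (0:ℝ)..(h + u), T s f) - (∫ s in (0:ℝ)..u, T s f))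
        (T h f - T 0 f) 0 := by
      refine HasDerivAt.sub ?_ (hd 0)
      have := (hd (h + 0)).comp_const_add h 0
      simpa using this
    rw [hT.zero_apply] at hd1
    have h2 := hd1.tendsto_slope_zero_right
    unfold InGenerator
    refine h2.congr' ?_
    filter_upwards [self_mem_nhdsWithin] with t ht
    have ht' : (0:ℝ) < t := ht
    congr 1
    rw [← ContinuousLinearMap.intervalIntegral_comp_comm _ ((hc f).intervalIntegrable _ _)]
    have e1 : ∫ s in (0:ℝ)..h, T t (T s f) = ∫ s in (0:ℝ)..h, T (t + s) f := by
      apply intervalIntegral.integral_congr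
      intro s hs
      rw [Set.uIcc_of_le hh.le] at hs
      exact (hT.add_apply ht'.le hs.1 f).symm
    rw [e1, intervalIntegral.integral_comp_add_left (fun s => T s f)]
    have := intervalIntegral.integral_add_adjacent_intervals
      ((hc f).intervalIntegrable (μ := volume) 0 t) ((hc f).intervalIntegrable t (t + h))
    simp only [zero_add, add_zero, intervalIntegral.integral_same, sub_zero, add_comm h t]
    rw [← this]
    abel
  have hsm : ∀ c : ℝ, ∀ f g, InGenerator T f g → InGenerator T (c • f) (c • g) := by
    intro c f g h
    unfold InGenerator at *
    refine (h.const_smul c).congr (fun t => ?_)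
    rw [map_smul, ← smul_sub, smul_comm]
  intro f
  rw [mem_closure_iff_seq_limit]
  refine ⟨fun n => ((n:ℝ) + 1) • ∫ s in (0:ℝ)..(1 / ((n:ℝ) + 1)), T s f,
    fun n => ⟨_, hsm _ _ _ (key f _ (by positivity))⟩, ?_⟩
  have hd : HasDerivAt (fun u => ∫ s in (0:ℝ)..u, T s f) (T 0 f) 0 :=
      (hc f).integral_hasStrictDerivAt 0 0 |>.hasDerivAt
  have h2 := hd.tendsto_slope_zero_right
  have h3 : Tendsto (fun n : ℕ => 1 / ((n:ℝ) + 1)) atTop (𝓝[>] 0) := by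
    rw [tendsto_nhdsWithin_iff]
    refine ⟨tendsto_one_div_add_atTop_nhds_zero_nat, Eventually.of_forall fun n => ?_⟩
    have : 0 < 1 / ((n:ℝ) + 1) := by positivity
    exact this
  have h4 := h2.comp h3
  rw [hT.zero_apply] at h4
  refine h4.congr (fun n => ?_)
  simp

lemma CSG.orbit {S : ℝ → E →L[ℝ] E} (hS : CSG S) {f g : E} (h : InGenerator S f g) {s : ℝ}
    (hs : 0 ≤ s) : InGenerator S (S s f) (S s g) := by
  unfold InGenerator at *
  refine (((S s).continuous.tendsto g).comp h).congr' ?_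
  filter_upwards [self_mem_nhdsWithin] with t ht
  have ht' : (0:ℝ) < t := ht
  simp only [Function.comp, map_smul, map_sub]
  rw [← hS.add_apply hs ht'.le, ← hS.add_apply ht'.le hs, add_comm]

/-- Duhamel formula. -/
lemma duhamel [CompleteSpace E] {T S : ℝ → E →L[ℝ] E} (hT : CSG T) (hS : CSG S) {B : E →L[ℝ] E}
    (hP : Pert T S B) {t : ℝ} (ht : 0 ≤ t) (f : E) :
    T t f = S t f + ∫ s in (0:ℝ)..t, T (t - s) (B (S s f)) := by
  have hc2 : Continuous (fun q : E × ℝ => T (t - q.2) (B (S q.2 q.1))) :=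
    hT.cont (by fun_prop) (B.continuous.comp (hS.cont (by fun_prop) (by fun_prop)))
  have hcl : IsClosed {f : E | T t f = S t f + ∫ s in (0:ℝ)..t, T (t - s) (B (S s f))} := by
    apply isClosed_eq (T t).continuous
    apply (S t).continuous.add
    exact intervalIntegral.continuous_parametric_intervalIntegral_of_continuous' hc2 0 t
  suffices h : {f : E | ∃ g, InGenerator S f g} ⊆
      {f : E | T t f = S t f + ∫ s in (0:ℝ)..t, T (t - s) (B (S s f))} from
    hcl.closure_subset_iff.2 h (hS.dense f)
  rintro f ⟨g, hg⟩
  have hint := intervalIntegral.integral_eq_sub_of_hasDeriv_right (a := (0:ℝ)) (b := t)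
    (f := fun s => T (t - s) (S s f)) (f' := fun s => - T (t - s) (B (S s f)))
    (hT.cont (by fun_prop) (hS.cont continuous_id continuous_const)).continuousOn ?_ ?_
  · rw [intervalIntegral.integral_neg] at hint
    simp only [sub_self, sub_zero, hT.zero_apply, hS.zero_apply] at hint
    simp only [Set.mem_ofPred_eq]
    rw [neg_eq_iff_eq_neg] at hint
    rw [hint]; abel
  · intro s hs
    rw [min_eq_left ht, max_eq_right ht] at hs
    have hs0 : 0 ≤ s := hs.1.le
    have g1 := hS.orbit hg hs0
    have g2 := hP _ _ g1
    have g3 := g1.sub g2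
    rw [hasDerivWithinAt_iff_tendsto_slope' (by simp)]
    have hsh : Tendsto (fun x => x - s) (𝓝[>] s) (𝓝[>] 0) := by
      rw [tendsto_nhdsWithin_iff]
      constructor
      · have : Tendsto (fun x => x - s) (𝓝 s) (𝓝 (s - s)) := by
          exact (continuous_id.sub continuous_const).tendsto s
        rw [sub_self] at this
        exact this.mono_left nhdsWithin_le_nhds
      · filter_upwards [self_mem_nhdsWithin] with x hx
        simpa using hx
    have g4 := g3.comp hsh
    have g5 : Tendsto (fun x => t - x) (𝓝[>] s) (𝓝 (t - s)) :=
      ((continuous_const.sub continuous_id).tendsto s).mono_left nhdsWithin_le_nhds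
    have g6 := (hT.2.tendsto (t - s, S s g - (S s g + B (S s f)))).comp (g5.prodMk_nhds g4)
    have e : S s g - (S s g + B (S s f)) = - B (S s f) := by abel
    simp only [e, map_neg] at g6
    refine g6.congr' ?_
    filter_upwards [Ioo_mem_nhdsGT hs.2] with x hx
    have hxs : 0 ≤ x - s := by linarith [hx.1]
    have hxt : 0 ≤ t - x := by linarith [hx.2]
    simp only [Function.comp, slope_def_module]
    have e1 : S x f = S (x - s) (S s f) := by
      rw [← hS.add_apply hxs hs0]; congr 2; ring
    have e2 : T (t - s) (S s f) = T (t - x) (T (x - s) (S s f)) := by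
      rw [← hT.add_apply hxt hxs]; congr 2; ring
    rw [e2, e1, ← smul_sub, map_smul, ← map_sub]
    congr 2
    abel
  · exact ((hT.cont (by fun_prop) (B.continuous.comp
      (hS.cont continuous_id continuous_const))).neg).intervalIntegrable _ _

/-- Shifted semigroup. -/
def shift (m : ℝ) (T : ℝ → E →L[ℝ] E) : ℝ → E →L[ℝ] E := fun t => Real.exp (-(m * t)) • T t

lemma CSG.shift {T : ℝ → E →L[ℝ] E} (hT : CSG T) (m : ℝ) : CSG (shift m T) := by
  refine ⟨⟨?_, ?_⟩, ?_⟩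
  · simp [Absorption.shift, hT.1.1]
  · intro s t hs ht
    ext x
    simp only [Absorption.shift, _root_.smul_apply, ContinuousLinearMap.comp_apply,
      map_smul, smul_smul, hT.add_apply hs ht]
    rw [← Real.exp_add]; congr 2; ring
  · simp only [Absorption.shift, _root_.smul_apply]
    exact Continuous.smul (by fun_prop) hT.2

lemma inGenerator_shift {T : ℝ → E →L[ℝ] E} (m : ℝ) {f g : E} (h : InGenerator T f g) :
    InGenerator (shift m T) f (g - m • f) := by
  unfold InGenerator at *
  have h0 : HasDerivAt (fun t : ℝ => Real.exp (-(m * t))) (-m) 0 := by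
    have := (((hasDerivAt_id (0:ℝ)).const_mul m).neg).exp
    simpa using this
  have h1 : Tendsto (fun t : ℝ => Real.exp (-(m * t))) (𝓝[>] 0) (𝓝 1) := by
    have := h0.continuousAt.tendsto
    simp only [mul_zero, neg_zero, Real.exp_zero] at this
    exact this.mono_left nhdsWithin_le_nhds
  have h2 := h0.tendsto_slope_zero_right
  have h3 := (h1.smul h).add (h2.smul_const f)
  simp only [one_smul, neg_smul, ← sub_eq_add_neg] at h3
  refine h3.congr (fun t => ?_)
  simp only [shift, _root_.smul_apply, zero_add, mul_zero, neg_zero, Real.exp_zero,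
    smul_eq_mul]
  module

lemma Pert.shift {T S : ℝ → E →L[ℝ] E} {B : E →L[ℝ] E} (h : Pert T S B) (m : ℝ) :
    Pert (shift m T) S (B - m • ContinuousLinearMap.id ℝ E) := by
  intro f g hg
  have := inGenerator_shift m (h f g hg)
  simpa [add_sub_assoc] using this

end banach

section lattice
variable {E : Type*} [NormedAddCommGroup E] [NormedSpace ℝ E] [CompleteSpace E] [Lattice E]
  [HasSolidNorm E] [IsOrderedAddMonoid E] [IsOrderedModule ℝ E] [OrderClosedTopology E]

lemma ii_nonneg {t : ℝ} (ht : 0 ≤ t) {w : ℝ → E} (h : ∀ s, 0 ≤ s → s ≤ t → 0 ≤ w s) :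
    0 ≤ ∫ s in (0:ℝ)..t, w s := by
  rw [intervalIntegral.integral_of_le ht]
  apply integral_nonneg_of_ae
  rw [EventuallyLE, ae_restrict_iff' measurableSet_Ioc]
  exact Eventually.of_forall fun s hs => h s hs.1.le hs.2

lemma ii_mono {t : ℝ} (ht : 0 ≤ t) {v w : ℝ → E} (hv : Continuous v) (hw : Continuous w)
    (h : ∀ s, 0 ≤ s → s ≤ t → v s ≤ w s) :
    ∫ s in (0:ℝ)..t, v s ≤ ∫ s in (0:ℝ)..t, w s := by
  rw [← sub_nonneg, ← intervalIntegral.integral_sub (hw.intervalIntegrable _ _)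
    (hv.intervalIntegrable _ _)]
  exact ii_nonneg ht fun s h0 h1 => sub_nonneg.2 (h s h0 h1)

lemma volterra_nonneg {T : ℝ → E →L[ℝ] E} (hT : CSG T)
    (hTp : ∀ t, 0 ≤ t → ∀ f, 0 ≤ f → 0 ≤ T t f) {B : E →L[ℝ] E} (hB : ∀ f, 0 ≤ f → 0 ≤ B f)
    {w : ℝ → E} (hw : Continuous w)
    (h : ∀ s, 0 ≤ s → ∫ σ in (0:ℝ)..s, T (s - σ) (B (w σ)) ≤ w s) :
    ∀ t, 0 ≤ t → 0 ≤ w t := by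
  intro t ht
  have hn : Continuous (fun s => (w s)⁻) := by
    simp only [negPart_def]
    exact (hw.neg).sup continuous_const
  obtain ⟨C, hC0, hC⟩ := locbdd hT.isC0 t
  have hcT : ∀ s, ∀ v : ℝ → E, Continuous v → Continuous (fun σ => T (s - σ) (B (v σ))) :=
    fun s v hv => hT.cont (by fun_prop) (B.continuous.comp hv)
  have h1 : ∀ s, 0 ≤ s → (w s)⁻ ≤ ∫ σ in (0:ℝ)..s, T (s - σ) (B ((w σ)⁻)) := by
    intro s hs
    rw [negPart_def]
    apply sup_le
    · rw [neg_le]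
      refine le_trans ?_ (h s hs)
      rw [← intervalIntegral.integral_neg]
      apply ii_mono hs (hcT s _ hn).neg (hcT s _ hw)
      intro σ h0 h1
      change -(T (s - σ) (B (w σ)⁻)) ≤ T (s - σ) (B (w σ))
      rw [← sub_nonneg, sub_neg_eq_add, ← map_add, ← map_add]
      apply hTp _ (by linarith) _ (hB _ _)
      have := neg_le_negPart (w σ)
      rw [neg_le_iff_add_nonneg'] at this
      rwa [add_comm] at this ⊢
    · exact ii_nonneg hs fun σ h0 h1 => hTp _ (by linarith) _ (hB _ (negPart_nonneg _))
  set φ : ℝ → ℝ := fun s => ‖(w s)⁻‖ with hφ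
  have hφc : Continuous φ := hn.norm
  have h2 : ∀ s, 0 ≤ s → s ≤ t → φ s ≤ (C * ‖B‖) * ∫ σ in (0:ℝ)..s, φ σ := by
    intro s hs hst
    have a1 : φ s ≤ ‖∫ σ in (0:ℝ)..s, T (s - σ) (B ((w σ)⁻))‖ :=
      norm_le_norm_of_abs_le_abs (by
        rw [abs_of_nonneg (negPart_nonneg _)]
        exact (h1 s hs).trans (le_abs_self _))
    refine a1.trans ?_
    rw [← intervalIntegral.integral_const_mul]
    refine intervalIntegral.norm_integral_le_of_norm_le hs ?_
      ((hφc.const_mul _).intervalIntegrable _ _)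
    refine Eventually.of_forall fun σ hσ => ?_
    refine ((T (s - σ)).le_opNorm _).trans ?_
    rw [mul_assoc]
    gcongr
    · exact hC _ (by linarith [hσ.2]) (by linarith [hσ.1])
    · exact B.le_opNorm _
  have hF := norm_le_gronwallBound_of_norm_deriv_right_le (f := fun s => ∫ σ in (0:ℝ)..s, φ σ)
    (f' := φ) (δ := 0) (K := C * ‖B‖) (ε := 0) (a := 0) (b := t)
    (intervalIntegral.continuous_primitive (fun a b => hφc.intervalIntegrable a b) 0).continuousOn
    (fun x _ => (hφc.integral_hasStrictDerivAt 0 x).hasDerivAt.hasDerivWithinAt)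
    (by simp) (by
      intro x hx
      rw [add_zero, Real.norm_of_nonneg (norm_nonneg _),
        Real.norm_of_nonneg (intervalIntegral.integral_nonneg hx.1 fun _ _ => norm_nonneg _)]
      exact h2 x hx.1 hx.2.le) t ⟨ht, le_rfl⟩
  have hz : ∫ σ in (0:ℝ)..t, φ σ = 0 := by
    simpa [gronwallBound_ε0] using hF
  have h3 := h2 t ht le_rfl
  rw [hz, mul_zero] at h3
  have h4 : (w t)⁻ = 0 := norm_le_zero_iff.1 h3
  exact negPart_eq_zero.1 h4

lemma pos_mono {T : E →L[ℝ] E} (h : ∀ f, 0 ≤ f → 0 ≤ T f) {f g : E} (hfg : f ≤ g) : T f ≤ T g := by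
  have := h _ (sub_nonneg.2 hfg)
  rwa [map_sub, sub_nonneg] at this

lemma shift_pos {T : ℝ → E →L[ℝ] E} (hTp : ∀ t, 0 ≤ t → ∀ f, 0 ≤ f → 0 ≤ T t f) (m : ℝ) :
    ∀ t, 0 ≤ t → ∀ f, 0 ≤ f → 0 ≤ shift m T t f :=
  fun t ht f hf => smul_nonneg (Real.exp_nonneg _) (hTp t ht f hf)

lemma duhamel_shift {T S : ℝ → E →L[ℝ] E} (hT : CSG T) (hS : CSG S) {B : E →L[ℝ] E}
    (hP : Pert T S B) (m : ℝ) {t : ℝ} (ht : 0 ≤ t) (f : E) :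
    S t f = shift m T t f + ∫ s in (0:ℝ)..t, shift m T (t - s)
      ((m • ContinuousLinearMap.id ℝ E - B) (S s f)) := by
  have := duhamel (hT.shift m) hS (hP.shift m) ht f
  rw [this, add_assoc, ← intervalIntegral.integral_add]
  · symm
    convert add_zero _
    refine (intervalIntegral.integral_congr (g := fun _ => (0:E)) fun s _ => ?_).trans (by simp)
    simp only [← map_add]
    simp
  · exact ((hT.shift m).cont (by fun_prop) ((ContinuousLinearMap.continuous _).comp
      (hS.cont continuous_id continuous_const))).intervalIntegrable _ _
  · exact ((hT.shift m).cont (by fun_prop) ((ContinuousLinearMap.continuous _).comp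
      (hS.cont continuous_id continuous_const))).intervalIntegrable _ _

lemma pert_pos {T S : ℝ → E →L[ℝ] E} (hT : CSG T) (hS : CSG S) {B : E →L[ℝ] E}
    (hP : Pert T S B) (hTp : ∀ t, 0 ≤ t → ∀ f, 0 ≤ f → 0 ≤ T t f) {m : ℝ}
    (hB : ∀ f, 0 ≤ f → B f ≤ m • f) : ∀ t, 0 ≤ t → ∀ f, 0 ≤ f → 0 ≤ S t f := by
  intro t ht f hf
  refine volterra_nonneg (hT.shift m) (shift_pos hTp m) (B := m • ContinuousLinearMap.id ℝ E - B)
    (fun f hf => by simpa using hB f hf) (w := fun s => S s f)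
    (hS.cont continuous_id continuous_const) ?_ t ht
  intro s hs
  conv_rhs => rw [duhamel_shift hT hS hP m hs f]
  exact le_add_of_nonneg_left (shift_pos hTp m s hs f hf)

lemma pert_mono {T₁ T₂ S₁ S₂ : ℝ → E →L[ℝ] E} (hT₁ : CSG T₁) (hT₂ : CSG T₂) (hS₁ : CSG S₁)
    (hS₂ : CSG S₂) {B₁ B₂ : E →L[ℝ] E} (hP₁ : Pert T₁ S₁ B₁) (hP₂ : Pert T₂ S₂ B₂)
    (hTp₁ : ∀ t, 0 ≤ t → ∀ f, 0 ≤ f → 0 ≤ T₁ t f)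
    (hT : ∀ t, 0 ≤ t → ∀ f, 0 ≤ f → T₁ t f ≤ T₂ t f) {m : ℝ}
    (hB₁ : ∀ f, 0 ≤ f → B₁ f ≤ m • f) (hB : ∀ f, 0 ≤ f → B₂ f ≤ B₁ f) :
    ∀ t, 0 ≤ t → ∀ f, 0 ≤ f → S₁ t f ≤ S₂ t f := by
  intro t ht f hf
  have hTp₂ : ∀ t, 0 ≤ t → ∀ f, 0 ≤ f → 0 ≤ T₂ t f :=
    fun t ht f hf => (hTp₁ t ht f hf).trans (hT t ht f hf)
  have hB₂ : ∀ f, 0 ≤ f → B₂ f ≤ m • f := fun f hf => (hB f hf).trans (hB₁ f hf)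
  have hp₁ := pert_pos hT₁ hS₁ hP₁ hTp₁ hB₁
  have hsm : ∀ t, 0 ≤ t → ∀ f, 0 ≤ f → shift m T₁ t f ≤ shift m T₂ t f :=
    fun t ht f hf => smul_le_smul_of_nonneg_left (hT t ht f hf) (Real.exp_nonneg _)
  rw [← sub_nonneg]
  have hc₁ : Continuous (fun s => S₁ s f) := hS₁.cont continuous_id continuous_const
  have hc₂ : Continuous (fun s => S₂ s f) := hS₂.cont continuous_id continuous_const
  refine volterra_nonneg (hT₂.shift m) (shift_pos hTp₂ m)
    (B := m • ContinuousLinearMap.id ℝ E - B₂)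
    (fun f hf => by simpa using hB₂ f hf) (w := fun s => S₂ s f - S₁ s f)
    (hc₂.sub hc₁) ?_ t ht
  intro s hs
  have e : ∫ σ in (0:ℝ)..s, shift m T₂ (s - σ)
      ((m • ContinuousLinearMap.id ℝ E - B₂) (S₂ σ f - S₁ σ f)) =
      (∫ σ in (0:ℝ)..s, shift m T₂ (s - σ) ((m • ContinuousLinearMap.id ℝ E - B₂) (S₂ σ f))) -
      ∫ σ in (0:ℝ)..s, shift m T₂ (s - σ) ((m • ContinuousLinearMap.id ℝ E - B₂) (S₁ σ f)) := by
    rw [← intervalIntegral.integral_sub]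
    · simp only [map_sub]
    · exact ((hT₂.shift m).cont (by fun_prop) ((ContinuousLinearMap.continuous _).comp
        hc₂)).intervalIntegrable _ _
    · exact ((hT₂.shift m).cont (by fun_prop) ((ContinuousLinearMap.continuous _).comp
        hc₁)).intervalIntegrable _ _
  rw [e]
  conv_rhs => rw [duhamel_shift hT₂ hS₂ hP₂ m hs f, duhamel_shift hT₁ hS₁ hP₁ m hs f]
  have a1 := hsm s hs f hf
  have a2 : ∫ σ in (0:ℝ)..s, shift m T₁ (s - σ) ((m • ContinuousLinearMap.id ℝ E - B₁) (S₁ σ f)) ≤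
      ∫ σ in (0:ℝ)..s, shift m T₂ (s - σ) ((m • ContinuousLinearMap.id ℝ E - B₂) (S₁ σ f)) := by
    apply ii_mono hs
      ((hT₁.shift m).cont (by fun_prop) ((ContinuousLinearMap.continuous _).comp hc₁))
      ((hT₂.shift m).cont (by fun_prop) ((ContinuousLinearMap.continuous _).comp hc₁))
    intro σ h0 h1
    have q := hp₁ σ h0 f hf
    refine (hsm _ (by linarith) _ ?_).trans (pos_mono (shift_pos hTp₂ m _ (by linarith)) ?_)
    · simpa using hB₁ _ q
    · change (m • ContinuousLinearMap.id ℝ E) (S₁ σ f) - B₁ (S₁ σ f) ≤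
        (m • ContinuousLinearMap.id ℝ E) (S₁ σ f) - B₂ (S₁ σ f)
      exact sub_le_sub_left (hB _ q) _
  have a3 := add_le_add a1 a2
  rw [← sub_nonneg] at a3 ⊢
  convert a3 using 1
  abel

lemma final_est {U Q P P' : ℝ → E →L[ℝ] E} (hU : CSG U) (hQ : CSG Q) (hP : CSG P) (hP' : CSG P')
    {r d : E →L[ℝ] E} (h1 : Pert U Q r) (h2 : Pert P' P d)
    (hQ0 : ∀ t, 0 ≤ t → ∀ f, 0 ≤ f → 0 ≤ Q t f)
    (hQU : ∀ t, 0 ≤ t → ∀ f, 0 ≤ f → Q t f ≤ U t f)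
    (hUP : ∀ t, 0 ≤ t → ∀ f, 0 ≤ f → U t f ≤ P t f)
    (hPP : ∀ t, 0 ≤ t → ∀ f, 0 ≤ f → P t f ≤ P' t f)
    (hr : ∀ f, 0 ≤ f → 0 ≤ r f) {c : ℝ} (hc : 0 ≤ c) (hd : ∀ f, 0 ≤ f → c • r f ≤ d f) :
    ∀ t, 0 ≤ t → ∀ f, 0 ≤ f → c • (U t f - Q t f) ≤ P' t f - P t f := by
  intro t ht f hf
  have hU0 : ∀ t, 0 ≤ t → ∀ f, 0 ≤ f → 0 ≤ U t f :=
    fun t ht f hf => (hQ0 t ht f hf).trans (hQU t ht f hf)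
  rw [duhamel hU hQ h1 ht f, duhamel hP' hP h2 ht f, add_sub_cancel_left, add_sub_cancel_left,
    ← intervalIntegral.integral_smul]
  apply ii_mono ht
    ((hU.cont (by fun_prop) (r.continuous.comp (hQ.cont continuous_id continuous_const))).const_smul c)
    (hP'.cont (by fun_prop) (d.continuous.comp (hP.cont continuous_id continuous_const)))
  intro s h0 h1
  have q := hQ0 s h0 f hf
  have q' := (hQU s h0 f hf).trans (hUP s h0 f hf)
  have hts : 0 ≤ t - s := by linarith
  have hUP' : ∀ f, 0 ≤ f → U (t - s) f ≤ P' (t - s) f :=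
    fun f hf => (hUP _ hts f hf).trans (hPP _ hts f hf)
  change c • U (t - s) (r (Q s f)) ≤ P' (t - s) (d (P s f))
  rw [← map_smul]
  have hcr : ∀ f, 0 ≤ f → 0 ≤ c • r f := fun f hf => smul_nonneg hc (hr f hf)
  refine (hUP' _ (hcr _ q)).trans ?_
  apply pos_mono (fun f hf => (hU0 _ hts f hf).trans (hUP' f hf))
  refine le_trans ?_ (hd _ (q.trans q'))
  exact smul_le_smul_of_nonneg_left (pos_mono hr q') hc

end lattice

end Absorption
namespace Absorption

section lattice2
variable {E : Type*} [NormedAddCommGroup E] [NormedSpace ℝ E] [CompleteSpace E] [Lattice E]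
  [HasSolidNorm E] [IsOrderedAddMonoid E] [IsOrderedModule ℝ E] [OrderClosedTopology E]

lemma Pert.clamp {T S : ℝ → E →L[ℝ] E} {B : E →L[ℝ] E} (h : Pert T S B) :
    Pert (clamp T) (clamp S) B := fun f g hg =>
  (inGenerator_clamp T _ _).2 (h f g ((inGenerator_clamp S _ _).1 hg))

/-- Order between families of operators, for nonnegative times. -/
def FLe (T S : ℝ → E →L[ℝ] E) : Prop := ∀ t, 0 ≤ t → ∀ f, 0 ≤ f → T t f ≤ S t f

/-- Positivity of families of operators, for nonnegative times. -/
def FPos (T : ℝ → E →L[ℝ] E) : Prop := ∀ t, 0 ≤ t → ∀ f, 0 ≤ f → 0 ≤ T t f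

lemma FLe.clamp {T S : ℝ → E →L[ℝ] E} (h : FLe T S) : FLe (clamp T) (clamp S) :=
  fun t ht f hf => by
    rw [clamp_of_nonneg _ ht, clamp_of_nonneg _ ht]; exact h t ht f hf

lemma FPos.clamp {T : ℝ → E →L[ℝ] E} (h : FPos T) : FPos (clamp T) :=
  fun t ht f hf => by
    rw [clamp_of_nonneg _ ht]; exact h t ht f hf

lemma pert_pos' {T S : ℝ → E →L[ℝ] E} (hT : IsC0Semigroup T) (hS : IsC0Semigroup S)
    {B : E →L[ℝ] E} (hP : Pert T S B) (hTp : FPos T) {m : ℝ}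
    (hB : ∀ f, 0 ≤ f → B f ≤ m • f) : FPos S := by
  intro t ht f hf
  have := pert_pos (csg_clamp hT) (csg_clamp hS) hP.clamp hTp.clamp hB t ht f hf
  rwa [clamp_of_nonneg _ ht] at this

lemma pert_mono' {T₁ T₂ S₁ S₂ : ℝ → E →L[ℝ] E} (hT₁ : IsC0Semigroup T₁) (hT₂ : IsC0Semigroup T₂)
    (hS₁ : IsC0Semigroup S₁) (hS₂ : IsC0Semigroup S₂) {B₁ B₂ : E →L[ℝ] E}
    (hP₁ : Pert T₁ S₁ B₁) (hP₂ : Pert T₂ S₂ B₂)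
    (hTp₁ : FPos T₁) (hT : FLe T₁ T₂) {m : ℝ}
    (hB₁ : ∀ f, 0 ≤ f → B₁ f ≤ m • f) (hB : ∀ f, 0 ≤ f → B₂ f ≤ B₁ f) : FLe S₁ S₂ := by
  intro t ht f hf
  have := pert_mono (csg_clamp hT₁) (csg_clamp hT₂) (csg_clamp hS₁) (csg_clamp hS₂) hP₁.clamp
    hP₂.clamp hTp₁.clamp hT.clamp hB₁ hB t ht f hf
  rwa [clamp_of_nonneg _ ht, clamp_of_nonneg _ ht] at this

lemma final_est' {U Q P P' : ℝ → E →L[ℝ] E} (hU : IsC0Semigroup U) (hQ : IsC0Semigroup Q)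
    (hP : IsC0Semigroup P) (hP' : IsC0Semigroup P')
    {r d : E →L[ℝ] E} (h1 : Pert U Q r) (h2 : Pert P' P d)
    (hQ0 : FPos Q) (hQU : FLe Q U) (hUP : FLe U P) (hPP : FLe P P')
    (hr : ∀ f, 0 ≤ f → 0 ≤ r f) {c : ℝ} (hc : 0 ≤ c) (hd : ∀ f, 0 ≤ f → c • r f ≤ d f) :
    ∀ t, 0 ≤ t → ∀ f, 0 ≤ f → c • (U t f - Q t f) ≤ P' t f - P t f := by
  intro t ht f hf
  have := final_est (csg_clamp hU) (csg_clamp hQ) (csg_clamp hP) (csg_clamp hP') h1.clamp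
    h2.clamp hQ0.clamp hQU.clamp hUP.clamp hPP.clamp hr hc hd t ht f hf
  simpa only [clamp_of_nonneg _ ht] using this

lemma norm_dom {T U : ℝ → E →L[ℝ] E} (hU : FPos U) (hUT : FLe U T) {t : ℝ} (ht : 0 ≤ t) :
    ‖U t‖ ≤ ‖T t‖ := by
  refine ContinuousLinearMap.opNorm_le_bound _ (norm_nonneg _) fun f => ?_
  have h1 : |U t f| ≤ U t |f| := by
    rw [abs_le']
    refine ⟨pos_mono (hU t ht) (le_abs_self f), ?_⟩
    rw [← map_neg]
    exact pos_mono (hU t ht) (neg_le_abs f)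
  have h2 : ‖U t f‖ ≤ ‖T t |f|‖ := norm_le_norm_of_abs_le_abs
    ((h1.trans (hUT t ht _ (abs_nonneg f))).trans (le_abs_self _))
  refine h2.trans (((T t).le_opNorm _).trans ?_)
  rw [norm_abs_eq_norm]

lemma c0_of_gen {T U Q : ℝ → E →L[ℝ] E} (hT : IsC0Semigroup T) (hU : IsSemigroup U)
    (hbd : ∀ t, 0 ≤ t → ‖U t‖ ≤ ‖T t‖) (hQ : IsC0Semigroup Q)
    (h : ∀ f g, InGenerator Q f g → InGenerator U f g) : IsC0Semigroup U := by
  refine ⟨hU, fun f => ?_⟩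
  have hd : ∀ f g, InGenerator U f g → Tendsto (fun t => U t f) (𝓝[>] 0) (𝓝 f) := by
    intro f g hg
    have h1 : Tendsto (fun t : ℝ => t) (𝓝[>] 0) (𝓝 0) := nhdsWithin_le_nhds
    have h2 := (h1.smul hg).add_const f
    simp only [zero_smul, zero_add] at h2
    refine h2.congr' ?_
    filter_upwards [self_mem_nhdsWithin] with t ht
    have : t ≠ 0 := ne_of_gt ht
    rw [smul_smul, mul_inv_cancel₀ this, one_smul, sub_add_cancel]
  have hall : ∀ f, Tendsto (fun t => U t f) (𝓝[>] 0) (𝓝 f) := by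
    intro f
    obtain ⟨C, hC0, hC⟩ := locbdd hT 1
    rw [Metric.tendsto_nhds]
    intro ε hε
    have hδ : 0 < ε / (2 * (C + 1)) := by positivity
    obtain ⟨f', ⟨g, hg⟩, hf'⟩ := (csg_clamp hQ).dense.exists_dist_lt f hδ
    have hlim := hd f' g (h f' g ((inGenerator_clamp Q _ _).1 hg))
    rw [Metric.tendsto_nhds] at hlim
    filter_upwards [hlim (ε / 2) (by positivity), Ioo_mem_nhdsGT (show (0:ℝ) < 1 by norm_num)]
      with t h1 h2
    have e : U t f - f = U t (f - f') + (U t f' - f') + (f' - f) := by rw [map_sub]; abel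
    rw [dist_eq_norm] at *
    rw [e]
    have b1 : ‖U t (f - f')‖ ≤ C * ‖f - f'‖ :=
      ((U t).le_opNorm _).trans (by
        gcongr; exact (hbd t h2.1.le).trans (hC t h2.1.le h2.2.le))
    have b2 : (C + 1) * ‖f - f'‖ < ε / 2 := by
      rw [lt_div_iff₀ (by positivity)] at hf'
      linarith
    calc _ ≤ ‖U t (f - f')‖ + ‖U t f' - f'‖ + ‖f' - f‖ := norm_add₃_le
      _ < ε := by rw [norm_sub_rev f' f]; linarith
  have hall' : ∀ f, Tendsto (fun t => U t f) (𝓝[≥] 0) (𝓝 f) := by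
    intro f
    have h0 : U 0 f = f := by rw [hU.1]; rfl
    have : ContinuousWithinAt (fun t => U t f) (Set.Ioi 0) 0 := by
      change Tendsto _ _ (𝓝 (U 0 f)); rw [h0]; exact hall f
    rw [continuousWithinAt_Ioi_iff_Ici] at this
    change Tendsto _ _ (𝓝 (U 0 f)) at this
    rwa [h0] at this
  intro t ht
  have ht0 : (0:ℝ) ≤ t := ht
  obtain ⟨C, hC0, hC⟩ := locbdd hT (t + 1)
  unfold ContinuousWithinAt
  rw [tendsto_iff_norm_sub_tendsto_zero]
  have habs : Tendsto (fun s => |s - t|) (𝓝[Set.Ici 0] t) (𝓝[≥] 0) := by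
    rw [tendsto_nhdsWithin_iff]
    refine ⟨?_, Eventually.of_forall fun s => Set.mem_Ici.2 (abs_nonneg _)⟩
    have : Tendsto (fun s => |s - t|) (𝓝 t) (𝓝 |t - t|) :=
      ((continuous_id.sub continuous_const).abs).tendsto t
    simp only [sub_self, abs_zero] at this
    exact this.mono_left nhdsWithin_le_nhds
  have h3 := (tendsto_iff_norm_sub_tendsto_zero.1 ((hall' f).comp habs)).const_mul C
  rw [mul_zero] at h3
  refine squeeze_zero' (Eventually.of_forall fun _ => norm_nonneg _) ?_ h3
  have hlt : ∀ᶠ s in 𝓝[Set.Ici 0] t, s < t + 1 :=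
    (gt_mem_nhds (by linarith : t < t + 1)).filter_mono nhdsWithin_le_nhds
  have key : ∀ s s', 0 ≤ s → s ≤ s' → s ≤ t + 1 →
      ‖U s' f - U s f‖ ≤ C * ‖U (s' - s) f - f‖ := by
    intro s s' h0 h1 h2
    have : U s' f = U s (U (s' - s) f) := by
      have := hU.2 s (s' - s) h0 (by linarith)
      rw [add_sub_cancel] at this
      rw [this]; rfl
    rw [this, ← map_sub]
    refine ((U s).le_opNorm _).trans ?_
    gcongr
    exact (hbd s h0).trans (hC s h0 h2)
  filter_upwards [hlt, self_mem_nhdsWithin] with s hs hs0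
  have hs0' : (0:ℝ) ≤ s := hs0
  simp only [Function.comp]
  rcases le_total s t with hst | hst
  · rw [norm_sub_rev, abs_of_nonpos (by linarith), neg_sub]
    exact key s t hs0' hst (by linarith)
  · rw [abs_of_nonneg (by linarith)]
    exact key t s ht0 hst (by linarith)

lemma semigroup_lim {S : ℕ → ℝ → E →L[ℝ] E} {T U : ℝ → E →L[ℝ] E}
    (hS : ∀ k, IsSemigroup (S k)) (hbd : ∀ k t, 0 ≤ t → ‖S k t‖ ≤ ‖T t‖)
    (hlim : ∀ t, 0 ≤ t → ∀ f, Tendsto (fun k => S k t f) atTop (𝓝 (U t f))) :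
    IsSemigroup U := by
  constructor
  · ext f
    refine tendsto_nhds_unique (hlim 0 le_rfl f) ?_
    simp only [(hS _).1]
    exact tendsto_const_nhds
  · intro s t hs ht
    ext f
    refine tendsto_nhds_unique (hlim (s + t) (add_nonneg hs ht) f) ?_
    have h1 : Tendsto (fun k => S k s (S k t f - U t f)) atTop (𝓝 0) := by
      have h2 := (tendsto_iff_norm_sub_tendsto_zero.1 (hlim t ht f)).const_mul ‖T s‖
      rw [mul_zero] at h2
      refine squeeze_zero_norm (fun k => ?_) h2
      refine ((S k s).le_opNorm _).trans ?_
      gcongr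
      exact hbd k s hs
    have h3 := h1.add (hlim s hs (U t f))
    rw [zero_add] at h3
    refine h3.congr fun k => ?_
    rw [← map_add, sub_add_cancel, (hS k).2 s t hs ht]; rfl

end lattice2

section lp
variable {Ω : Type*} [MeasurableSpace Ω] {μ : Measure Ω} {p : ℝ≥0∞} [Fact (1 ≤ p)]

instance lpOrdMod : IsOrderedModule ℝ (Lp ℝ p μ) where
  smul_le_smul_of_nonneg_left a ha f g hfg := by
    rw [← Lp.coeFn_le] at *
    filter_upwards [hfg, Lp.coeFn_smul a f, Lp.coeFn_smul a g] with ω h1 h2 h3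
    rw [h2, h3]
    exact mul_le_mul_of_nonneg_left h1 ha
  smul_le_smul_of_nonneg_right f hf a b hab := by
    rw [← Lp.coeFn_nonneg] at hf
    rw [← Lp.coeFn_le]
    filter_upwards [hf, Lp.coeFn_smul a f, Lp.coeFn_smul b f] with ω h1 h2 h3
    rw [h2, h3]
    exact mul_le_mul_of_nonneg_right hab h1

/-- `B` is multiplication by `W`. -/
def IsMul (B : Lp ℝ p μ →L[ℝ] Lp ℝ p μ) (W : Ω → ℝ) : Prop :=
  ∀ f : Lp ℝ p μ, ⇑(B f) =ᵐ[μ] fun ω => W ω * f ω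

lemma IsMul.le {B B' : Lp ℝ p μ →L[ℝ] Lp ℝ p μ} {W W' : Ω → ℝ} (h : IsMul B W) (h' : IsMul B' W')
    (hW : ∀ ω, W ω ≤ W' ω) : ∀ f, 0 ≤ f → B f ≤ B' f := by
  intro f hf
  rw [← Lp.coeFn_nonneg] at hf
  rw [← Lp.coeFn_le]
  filter_upwards [hf, h f, h' f] with ω h1 h2 h3
  rw [h2, h3]
  exact mul_le_mul_of_nonneg_right (hW ω) h1

lemma IsMul.smul {B : Lp ℝ p μ →L[ℝ] Lp ℝ p μ} {W : Ω → ℝ} (h : IsMul B W) (c : ℝ) :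
    IsMul (c • B) (fun ω => c * W ω) := by
  intro f
  filter_upwards [h f, Lp.coeFn_smul c (B f)] with ω h1 h2
  rw [_root_.smul_apply, h2, Pi.smul_apply, h1, smul_eq_mul, mul_assoc]

lemma IsMul.sub {B B' : Lp ℝ p μ →L[ℝ] Lp ℝ p μ} {W W' : Ω → ℝ} (h : IsMul B W)
    (h' : IsMul B' W') : IsMul (B - B') (fun ω => W ω - W' ω) := by
  intro f
  filter_upwards [h f, h' f, Lp.coeFn_sub (B f) (B' f)] with ω h1 h2 h3
  rw [_root_.sub_apply, h3, Pi.sub_apply, h1, h2, sub_mul]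

lemma IsMul.const (c : ℝ) :
    IsMul (c • ContinuousLinearMap.id ℝ (Lp ℝ p μ)) (fun _ => c) := by
  intro f
  filter_upwards [Lp.coeFn_smul c f] with ω h2
  simpa using h2

lemma IsMul.zero : IsMul (0 : Lp ℝ p μ →L[ℝ] Lp ℝ p μ) (fun _ => 0) := by
  intro f
  filter_upwards [Lp.coeFn_zero ℝ p μ] with ω h2
  simpa using h2

lemma aesm {V : Ω → ℝ≥0∞} (hp : p ≠ ∞) (hV : LocallyMeasurable μ V) {φ : ℝ≥0∞ → ℝ}
    (hφ : Measurable φ) (f : Lp ℝ p μ) : AEStronglyMeasurable (fun ω => φ (V ω) * f ω) μ := by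
  have hp0 : p ≠ 0 := (lt_of_lt_of_le zero_lt_one (Fact.out : 1 ≤ p)).ne'
  obtain ⟨t, ht, hft, hs⟩ := (Lp.finStronglyMeasurable f hp0 hp).exists_set_sigmaFinite
  have hVt : AEMeasurable V (μ.restrict t) := by
    have e : μ.restrict t = (μ.restrict t).restrict (⋃ i, spanningSets (μ.restrict t) i) := by
      rw [iUnion_spanningSets, Measure.restrict_univ]
    rw [e, aemeasurable_iUnion_iff]
    intro i
    have hm := measurableSet_spanningSets (μ.restrict t) i
    have hfin := measure_spanningSets_lt_top (μ.restrict t) i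
    rw [Measure.restrict_apply hm] at hfin
    rw [Measure.restrict_restrict hm]
    obtain ⟨g, hg, hVg⟩ := hV _ (hm.inter ht) hfin
    exact ⟨g, hg, hVg⟩
  have h1 : AEStronglyMeasurable (fun ω => φ (V ω) * f ω) (μ.restrict t) :=
    (hφ.comp_aemeasurable hVt).aestronglyMeasurable.mul
      (Lp.aestronglyMeasurable f).restrict
  have h2 : (fun ω => φ (V ω) * f ω) = t.indicator (fun ω => φ (V ω) * f ω) := by
    ext ω
    by_cases h : ω ∈ t
    · simp [h]
    · simp [h, hft ω h]
  rw [h2]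
  exact (aestronglyMeasurable_indicator_iff ht).2 h1

lemma exists_mul {V : Ω → ℝ≥0∞} (hp : p ≠ ∞) (hV : LocallyMeasurable μ V) {φ : ℝ≥0∞ → ℝ}
    (hφ : Measurable φ) {m : ℝ} (hm : ∀ v, |φ v| ≤ m) :
    ∃ B : Lp ℝ p μ →L[ℝ] Lp ℝ p μ, IsMul B (fun ω => φ (V ω)) := by
  have hb : ∀ f : Lp ℝ p μ, ∀ᵐ ω ∂μ, ‖φ (V ω) * f ω‖ ≤ m * ‖f ω‖ := fun f =>
    Eventually.of_forall fun ω => by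
      rw [norm_mul]; exact mul_le_mul_of_nonneg_right (hm _) (norm_nonneg _)
  have hmem : ∀ f : Lp ℝ p μ, MemLp (fun ω => φ (V ω) * f ω) p μ := fun f =>
    (Lp.memLp f).of_le_mul (aesm hp hV hφ f) (hb f)
  refine ⟨LinearMap.mkContinuous
    { toFun := fun f => (hmem f).toLp _
      map_add' := ?_
      map_smul' := ?_ } m ?_, ?_⟩
  · intro f g
    rw [← MemLp.toLp_add]
    apply MemLp.toLp_congr
    filter_upwards [Lp.coeFn_add f g] with ω h
    rw [h, Pi.add_apply, Pi.add_apply, mul_add]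
  · intro c f
    rw [RingHom.id_apply, ← MemLp.toLp_const_smul]
    apply MemLp.toLp_congr
    filter_upwards [Lp.coeFn_smul c f] with ω h
    rw [h, Pi.smul_apply, Pi.smul_apply, smul_eq_mul, smul_eq_mul]
    ring
  · intro f
    refine Lp.norm_le_mul_norm_of_ae_le_mul ?_
    filter_upwards [(hmem f).coeFn_toLp, hb f] with ω h1 h2
    simp only [LinearMap.coe_mk, AddHom.coe_mk]
    rw [h1]; exact h2
  · intro f
    exact (hmem f).coeFn_toLp

lemma pert_of {T S : ℝ → Lp ℝ p μ →L[ℝ] Lp ℝ p μ} {W : Ω → ℝ} (h : IsPerturbedSG μ p T S W)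
    {B : Lp ℝ p μ →L[ℝ] Lp ℝ p μ} (hB : IsMul B W) : Pert T S B := by
  intro f g hg
  obtain ⟨g₀, h0, h1⟩ := (h.2 f g).1 hg
  have : g₀ = g + B f := by
    apply Lp.ext
    filter_upwards [h1, hB f, Lp.coeFn_add g (B f)] with ω a b c
    rw [c, Pi.add_apply, a, b]; ring
  rwa [← this]

lemma pert_of' {T S : ℝ → Lp ℝ p μ →L[ℝ] Lp ℝ p μ} {W : Ω → ℝ} (h : IsPerturbedSG μ p T S W)
    {B : Lp ℝ p μ →L[ℝ] Lp ℝ p μ} (hB : IsMul B W) {f g : Lp ℝ p μ} (hg : InGenerator T f g) :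
    InGenerator S f (g - B f) := by
  rw [h.2]
  refine ⟨g, hg, ?_⟩
  filter_upwards [hB f, Lp.coeFn_sub g (B f)] with ω b c
  rw [c, Pi.sub_apply, b]

lemma key_ineq {ε : ℝ} (hε : 0 < ε) {n m k K : ℕ} (h1 : (k:ℝ) ≤ ε * n) (h2 : k + ε * m ≤ K)
    (V : Ω → ℝ≥0∞) (ω : Ω) :
    ε * trunc (resid V n) m ω ≤ trunc (smulRate ε V) K ω - trunc (smulRate ε V) k ω := by
  unfold trunc resid smulRate
  have hm : (0:ℝ) ≤ ε * m := by positivity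
  by_cases hv : V ω = ∞
  · rw [hv]
    have : ENNReal.ofReal ε * ∞ = ∞ := ENNReal.mul_top (by simpa using hε)
    simp [this]
    linarith
  · lift V ω to NNReal using hv with v
    have e1 : ENNReal.ofReal ε * (v : ℝ≥0∞) = ENNReal.ofReal (ε * v) := by
      rw [ENNReal.ofReal_mul hε.le, ENNReal.ofReal_coe_nnreal]
    have hv0 : (0:ℝ) ≤ v := v.2
    have e2 : ∀ j : ℕ, (min (ENNReal.ofReal ε * (v : ℝ≥0∞)) j).toReal = min (ε * v) j := by
      intro j
      rw [e1, ENNReal.toReal_min ENNReal.ofReal_ne_top (ENNReal.natCast_ne_top j),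
        ENNReal.toReal_ofReal (by positivity), ENNReal.toReal_natCast]
    have e3 : (min ((v:ℝ≥0∞) - min (v:ℝ≥0∞) n) m).toReal = min ((v:ℝ) - min (v:ℝ) n) m := by
      rw [ENNReal.toReal_min (by simp) (ENNReal.natCast_ne_top m),
        ENNReal.toReal_sub_of_le (min_le_left _ _) (by simp),
        ENNReal.toReal_min (by simp) (ENNReal.natCast_ne_top n)]
      simp
    rw [e2, e2, e3, mul_min_of_nonneg _ _ hε.le, mul_sub, mul_min_of_nonneg _ _ hε.le]
    rcases le_total (ε * (v:ℝ)) k with a | a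
    · have b : ε * (v:ℝ) ≤ K := by linarith
      have c : ε * (v:ℝ) ≤ ε * n := by linarith
      rw [min_eq_left a, min_eq_left b, min_eq_left c]
      simp [hm]
    · rw [min_eq_right a]
      have : (k:ℝ) ≤ min (ε * v) (ε * n) := le_min a h1
      rcases le_total (ε * (v:ℝ)) K with b | b
      · rw [min_eq_left b]
        exact (min_le_left _ _).trans (by linarith)
      · rw [min_eq_right b]
        exact (min_le_right _ _).trans (by linarith)

lemma trunc_nonneg (V : Ω → ℝ≥0∞) (n : ℕ) (ω : Ω) : 0 ≤ trunc V n ω := ENNReal.toReal_nonneg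

lemma trunc_le (V : Ω → ℝ≥0∞) (n : ℕ) (ω : Ω) : trunc V n ω ≤ n := by
  unfold trunc
  refine ENNReal.toReal_le_of_le_ofReal (by positivity) ?_
  rw [ENNReal.ofReal_natCast]
  exact min_le_right _ _

lemma trunc_mono (V : Ω → ℝ≥0∞) {n m : ℕ} (h : n ≤ m) (ω : Ω) : trunc V n ω ≤ trunc V m ω := by
  unfold trunc
  refine ENNReal.toReal_mono ?_ (min_le_min le_rfl (by exact_mod_cast h))
  exact ((min_le_right _ _).trans_lt (ENNReal.natCast_lt_top m)).ne

lemma exists_mul_smul {V : Ω → ℝ≥0∞} (hp : p ≠ ∞) (hV : LocallyMeasurable μ V) (ε : ℝ) (k : ℕ) :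
    ∃ B : Lp ℝ p μ →L[ℝ] Lp ℝ p μ, IsMul B (trunc (smulRate ε V) k) := by
  refine exists_mul hp hV (φ := fun v => (min (ENNReal.ofReal ε * v) k).toReal) (m := k)
    (by fun_prop) (fun v => ?_)
  have h1 := trunc_nonneg (fun _ : Unit => ENNReal.ofReal ε * v) k ()
  have h2 := trunc_le (fun _ : Unit => ENNReal.ofReal ε * v) k ()
  exact (abs_of_nonneg h1).trans_le h2

lemma exists_mul_resid {V : Ω → ℝ≥0∞} (hp : p ≠ ∞) (hV : LocallyMeasurable μ V) (n k : ℕ) :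
    ∃ B : Lp ℝ p μ →L[ℝ] Lp ℝ p μ, IsMul B (trunc (resid V n) k) := by
  refine exists_mul hp hV (φ := fun v => (min (v - min v n) k).toReal) (m := k)
    (by fun_prop) (fun v => ?_)
  have h1 := trunc_nonneg (fun _ : Unit => v - min v n) k ()
  have h2 := trunc_le (fun _ : Unit => v - min v n) k ()
  exact (abs_of_nonneg h1).trans_le h2

lemma core (hp : p ≠ ∞) {T : ℝ → Lp ℝ p μ →L[ℝ] Lp ℝ p μ} (hT : IsC0Semigroup T)
    (hTpos : FPos T) {V : Ω → ℝ≥0∞} (hV : LocallyMeasurable μ V) {ε : ℝ} (hε : 0 < ε)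
    {U : ℝ → Lp ℝ p μ →L[ℝ] Lp ℝ p μ} (hU : IsAbsorptionSG μ p T (smulRate ε V) U)
    {R Q : ℕ → ℝ → Lp ℝ p μ →L[ℝ] Lp ℝ p μ}
    (hR : ∀ n : ℕ, IsAbsorptionSG μ p T (resid V n) (R n))
    (hQ : ∀ n : ℕ, IsAbsorptionSG μ p U (resid V n) (Q n))
    {L : ℝ → Lp ℝ p μ →L[ℝ] Lp ℝ p μ}
    (hL : ∀ t : ℝ, 0 ≤ t → ∀ f : Lp ℝ p μ,
      Tendsto (fun n : ℕ => R n t f) atTop (𝓝 (L t f))) :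
    (∀ n, FLe (Q n) (R n)) ∧ FLe U L := by
  obtain ⟨S, hS, hSlim⟩ := hU
  choose B hB using exists_mul_smul (p := p) hp hV ε
  choose r hr using exists_mul_resid (p := p) hp hV
  have hB1 : ∀ k f, 0 ≤ f → B k f ≤ (k:ℝ) • f := fun k =>
    (hB k).le (IsMul.const (k:ℝ)) (trunc_le _ k)
  have hr1 : ∀ n k f, 0 ≤ f → r n k f ≤ (k:ℝ) • f := fun n k =>
    (hr n k).le (IsMul.const (k:ℝ)) (trunc_le _ k)
  have hB0 : ∀ k f, 0 ≤ f → (0 : Lp ℝ p μ →L[ℝ] Lp ℝ p μ) f ≤ B k f := fun k =>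
    IsMul.zero.le (hB k) (trunc_nonneg _ k)
  have hr0 : ∀ n k f, 0 ≤ f → (0 : Lp ℝ p μ →L[ℝ] Lp ℝ p μ) f ≤ r n k f := fun n k =>
    IsMul.zero.le (hr n k) (trunc_nonneg _ k)
  have hPS : ∀ k, Pert T (S k) (B k) := fun k => pert_of (hS k) (hB k)
  have hPT : ∀ T : ℝ → Lp ℝ p μ →L[ℝ] Lp ℝ p μ, Pert T T 0 := fun T f g hg => by simpa using hg
  have hSpos : ∀ k, FPos (S k) := fun k => pert_pos' hT (hS k).1 (hPS k) hTpos (hB1 k)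
  have hrefl : ∀ T : ℝ → Lp ℝ p μ →L[ℝ] Lp ℝ p μ, FLe T T := fun T t _ f _ => le_rfl
  have hST : ∀ k, FLe (S k) T := fun k =>
    pert_mono' hT hT (hS k).1 hT (hPS k) (hPT T) hTpos (hrefl T) (hB1 k) (hB0 k)
  have hSS : ∀ k K, k ≤ K → FLe (S K) (S k) := fun k K hk =>
    pert_mono' hT hT (hS K).1 (hS k).1 (hPS K) (hPS k) hTpos (hrefl T) (hB1 K)
      ((hB k).le (hB K) (trunc_mono _ hk))
  have hUS : ∀ k, FLe U (S k) := fun k t ht f hf =>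
    le_of_tendsto (hSlim t ht f) (by
      filter_upwards [eventually_ge_atTop k] with K hK using hSS k K hK t ht f hf)
  have hUpos : FPos U := fun t ht f hf =>
    ge_of_tendsto' (hSlim t ht f) fun k => hSpos k t ht f hf
  have hUT : FLe U T := fun t ht f hf => (hUS 0 t ht f hf).trans (hST 0 t ht f hf)
  have hUsg : IsSemigroup U := semigroup_lim (fun k => (hS k).1.1)
    (fun k t ht => norm_dom (hSpos k) (hST k) ht) hSlim
  have hUC : IsC0Semigroup U := by
    obtain ⟨Q0, hQ0, -⟩ := hQ 0
    refine c0_of_gen hT hUsg (fun t ht => norm_dom hUpos hUT ht) (hQ0 0).1 fun f g hg => ?_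
    have h0 : IsMul (0 : Lp ℝ p μ →L[ℝ] Lp ℝ p μ) (trunc (resid V 0) 0) := by
      have : trunc (resid V 0) 0 = fun _ => 0 := by ext ω; simp [trunc]
      rw [this]; exact IsMul.zero
    simpa using pert_of (hQ0 0) h0 f g hg
  choose Qm hQm hQlim using hQ
  choose Rm hRm hRlim using hR
  have hQpert : ∀ n m, Pert U (Qm n m) (r n m) := fun n m => pert_of (hQm n m) (hr n m)
  have hRpert : ∀ n m, Pert T (Rm n m) (r n m) := fun n m => pert_of (hRm n m) (hr n m)
  have hQpos : ∀ n m, FPos (Qm n m) := fun n m =>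
    pert_pos' hUC (hQm n m).1 (hQpert n m) hUpos (hr1 n m)
  have hQU : ∀ n m, FLe (Qm n m) U := fun n m =>
    pert_mono' hUC hUC (hQm n m).1 hUC (hQpert n m) (hPT U) hUpos (hrefl U) (hr1 n m) (hr0 n m)
  have hQR : ∀ n m, FLe (Qm n m) (Rm n m) := fun n m =>
    pert_mono' hUC hT (hQm n m).1 (hRm n m).1 (hQpert n m) (hRpert n m) hUpos hUT (hr1 n m)
      (fun _ _ => le_rfl)
  have c1 : ∀ n, FLe (Q n) (R n) := fun n t ht f hf =>
    le_of_tendsto_of_tendsto' (hQlim n t ht f) (hRlim n t ht f) fun m => hQR n m t ht f hf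
  refine ⟨c1, fun t ht f hf => ?_⟩
  have est1 : ∀ k n m K : ℕ, (k:ℝ) ≤ ε * n → k + ε * m ≤ K →
      ε • (U t f - Qm n m t f) ≤ S k t f - S K t f := by
    intro k n m K h1 h2
    have hkK : k ≤ K := by
      have : (0:ℝ) ≤ ε * m := by positivity
      have : (k:ℝ) ≤ K := by linarith
      exact_mod_cast this
    refine final_est' hUC (hQm n m).1 (hS K).1 (hS k).1 (hQpert n m) (d := B K - B k) ?_
      (hQpos n m) (hQU n m) (hUS K) (hSS k K hkK) (fun f hf => ?_) hε.le ?_ t ht f hf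
    · intro f g hg
      have := pert_of' (hS k) (hB k) (hPS K f g hg)
      rwa [add_sub_assoc] at this
    · simpa using hr0 n m f hf
    · exact ((hr n m).smul ε).le ((hB K).sub (hB k)) (key_ineq hε h1 h2 V)
  have est2 : ∀ k n m : ℕ, (k:ℝ) ≤ ε * n → ε • (U t f - Qm n m t f) ≤ S k t f - U t f := by
    intro k n m h1
    refine ge_of_tendsto ((hSlim t ht f).const_sub (S k t f)) ?_
    obtain ⟨K0, hK0⟩ := exists_nat_ge ((k:ℝ) + ε * m)
    filter_upwards [eventually_ge_atTop K0] with K hK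
    exact est1 k n m K h1 (hK0.trans (by exact_mod_cast hK))
  have est3 : ∀ k n : ℕ, (k:ℝ) ≤ ε * n → ε • (U t f - R n t f) ≤ S k t f - U t f := by
    intro k n h1
    have : ε • (U t f - Q n t f) ≤ S k t f - U t f :=
      le_of_tendsto' (((hQlim n t ht f).const_sub (U t f)).const_smul ε)
        fun m => est2 k n m h1
    refine le_trans ?_ this
    exact smul_le_smul_of_nonneg_left (sub_le_sub_left (c1 n t ht f hf) _) hε.le
  have est4 : ∀ k : ℕ, ε • (U t f - L t f) ≤ S k t f - U t f := by
    intro k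
    refine le_of_tendsto (((hL t ht f).const_sub (U t f)).const_smul ε) ?_
    obtain ⟨n0, hn0⟩ := exists_nat_ge ((k:ℝ) / ε)
    filter_upwards [eventually_ge_atTop n0] with n hn
    refine est3 k n ?_
    have : (k:ℝ) / ε ≤ n := hn0.trans (by exact_mod_cast hn)
    rw [div_le_iff₀ hε] at this
    linarith
  have est5 : ε • (U t f - L t f) ≤ 0 := by
    have := ge_of_tendsto' ((hSlim t ht f).sub_const (U t f)) est4
    rwa [sub_self] at this
  have est6 := smul_le_smul_of_nonneg_left est5 (inv_nonneg.2 hε.le)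
  rw [smul_smul, inv_mul_cancel₀ hε.ne', one_smul, smul_zero] at est6
  exact sub_nonpos.1 est6

end lp
end Absorption
/-- For `T`-admissible `V`: `(T_{εV})_{V−V∧n}(t) ≤ T_{V−V∧n}(t)` for all
`ε > 0`, `n ∈ ℕ`, `t ≥ 0`; letting `n → ∞` gives `T_{εV}(t) ≤ (T_V)_{−V}(t)`, and letting
`ε → 0+` gives `T_{0,V} ≤ (T_V)_{−V}`. -/
theorem statement8
    {Ω : Type*} [MeasurableSpace Ω] (μ : Measure Ω) (p : ℝ≥0∞) [Fact (1 ≤ p)] (hp : p ≠ ∞)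
    (T : ℝ → Lp ℝ p μ →L[ℝ] Lp ℝ p μ)
    (hT : IsC0Semigroup T) (hTpos : IsPositiveSG T)
    (V : Ω → ℝ≥0∞) (hV : Admissible μ p T V)
    -- the absorption semigroups `T_{εV}` for `ε > 0`
    (Sε : ℝ → ℝ → Lp ℝ p μ →L[ℝ] Lp ℝ p μ)
    (hSε : ∀ ε : ℝ, 0 < ε → IsAbsorptionSG μ p T (smulRate ε V) (Sε ε))
    -- the absorption semigroups `T_{V − V∧n}`
    (R : ℕ → ℝ → Lp ℝ p μ →L[ℝ] Lp ℝ p μ)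
    (hR : ∀ n : ℕ, IsAbsorptionSG μ p T (resid V n) (R n))
    -- the absorption semigroups `(T_{εV})_{V − V∧n}`
    (Q : ℝ → ℕ → ℝ → Lp ℝ p μ →L[ℝ] Lp ℝ p μ)
    (hQ : ∀ ε : ℝ, 0 < ε → ∀ n : ℕ, IsAbsorptionSG μ p (Sε ε) (resid V n) (Q ε n))
    -- `(T_V)_{−V} = s-lim_{n→∞} T_{V−V∧n}` and `T_{0,V} = s-lim_{ε→0+} T_{εV}`
    (L L₀ : ℝ → Lp ℝ p μ →L[ℝ] Lp ℝ p μ)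
    (hL : ∀ t : ℝ, 0 ≤ t → ∀ f : Lp ℝ p μ,
      Tendsto (fun n : ℕ => R n t f) atTop (𝓝 (L t f)))
    (hL₀ : ∀ t : ℝ, 0 ≤ t → ∀ f : Lp ℝ p μ,
      Tendsto (fun ε : ℝ => Sε ε t f) (𝓝[>] (0 : ℝ)) (𝓝 (L₀ t f))) :
    -- `(T_{εV})_{V−V∧n}(t) ≤ T_{V−V∧n}(t)`
    (∀ ε : ℝ, 0 < ε → ∀ n : ℕ, ∀ t : ℝ, 0 ≤ t → ∀ f : Lp ℝ p μ, 0 ≤ f →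
        Q ε n t f ≤ R n t f) ∧
    -- `T_{εV}(t) ≤ (T_V)_{−V}(t)`
    (∀ ε : ℝ, 0 < ε → ∀ t : ℝ, 0 ≤ t → ∀ f : Lp ℝ p μ, 0 ≤ f → Sε ε t f ≤ L t f) ∧
    -- `T_{0,V} ≤ (T_V)_{−V}`
    (∀ t : ℝ, 0 ≤ t → ∀ f : Lp ℝ p μ, 0 ≤ f → L₀ t f ≤ L t f) := by
  have hc := fun ε (hε : 0 < ε) => core hp hT hTpos hV.1 hε (hSε ε hε) hR (hQ ε hε) hL
  refine ⟨fun ε hε n t ht f hf => (hc ε hε).1 n t ht f hf,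
    fun ε hε t ht f hf => (hc ε hε).2 t ht f hf, fun t ht f hf => ?_⟩
  refine le_of_tendsto (hL₀ t ht f) ?_
  filter_upwards [self_mem_nhdsWithin] with ε hε
  exact (hc ε hε).2 t ht f hf
end
end
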